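/- arXiv:1201.2219 — 3 statements merged into one kernel-verified Lean document; each statement's English description precedes it below -/
import Mathlib

section
/- Let m ≥ 0 and let σ, δ : ℝ^{m+2} → ℝ^{m+2} be the linear involutions σ(z₁,z₂,z₃,…,z_{m+2}) = (−z₁,z₂,z₃,…,z_{m+2}) and δ(z₁,z₂,z₃,…,z_{m+2}) = (z₁,−z₂,z₃,…,z_{m+2}). Let X be a C^∞ vector field on an open neighborhood U of 0 in ℝ^{m+2} with σ(U) = U and δ(U) = U such that: (1) X(z) = 0 for every z ∈ Σ := {z ∈ U : z₁ = z₂ = 0}; (2) X(σ(z)) = σ(X(z)) and X(δ(z)) = δ(X(z)) for all z ∈ U; (3) X = L + Y, where L is the linear vector field L(z) = z₁ e₁ − z₂ e₂ and Y is flat along Σ. Then X is locally smoothly linearizable at 0 in a σ- and δ-equivariant way: there exist an open neighborhood W ⊆ U of 0 with σ(W) = W and δ(W) = W, and a C^∞ diffeomorphism ψ from W onto an open neighborhood of 0 in ℝ^{m+2}, such that ψ(0) = 0, ψ∘σ = σ∘ψ and ψ∘δ = δ∘ψ on W, and Dψ(z)(X(z)) = L(ψ(z)) for all z ∈ W. 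-/
open scoped ContDiff

namespace NambuLin

variable {m : ℕ}

/-- The linear involution `σ(z₁,z₂,z₃,…) = (−z₁,z₂,z₃,…)` of `ℝ^{m+2}`. -/
def sig (z : Fin (m + 2) → ℝ) : Fin (m + 2) → ℝ :=
  fun i => if i = 0 then -z i else z i

/-- The linear involution `δ(z₁,z₂,z₃,…) = (z₁,−z₂,z₃,…)` of `ℝ^{m+2}`. -/
def del (z : Fin (m + 2) → ℝ) : Fin (m + 2) → ℝ :=
  fun i => if i = 1 then -z i else z i

/-- The linear vector field `L(z) = z₁ e₁ − z₂ e₂` on `ℝ^{m+2}`. -/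
def Lvf (z : Fin (m + 2) → ℝ) : Fin (m + 2) → ℝ :=
  fun i => if i = 0 then z 0 else if i = 1 then -z 1 else 0

/-- `φ` is a `C^∞` diffeomorphism from the open set `W` onto the open set `φ '' W`. -/
def IsSmoothDiffeoOn {N : ℕ} (φ : (Fin N → ℝ) → (Fin N → ℝ)) (W : Set (Fin N → ℝ)) : Prop :=
  IsOpen W ∧ IsOpen (φ '' W) ∧ ContDiffOn ℝ ∞ φ W ∧
    ∃ ψ : (Fin N → ℝ) → (Fin N → ℝ), ContDiffOn ℝ ∞ ψ (φ '' W) ∧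
      (∀ x ∈ W, ψ (φ x) = x) ∧ (∀ y ∈ φ '' W, φ (ψ y) = y)

/-!
A linearization is sought in the form `ψᵢ(z) = zᵢ + fᵢ(z)`. Since `L` is diagonal, with eigenvalues
`cᵢ`, the conjugacy equation decouples into the linear equations `X fᵢ - cᵢ fᵢ = cᵢ zᵢ - Xᵢ`, whose
right-hand sides are flat along `Σ`. A homogeneous partition of unity splits such a right-hand side
into pieces supported in cones around the four half-axes `±z₁`, `±z₂`; reflecting `z₁` and swapping
`z₁` with `z₂`, which reverses the time of `L`, leaves only the cone `|y| < 2x`.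

There the blow-up coordinates `(x, u, w)` with `u = x y` straighten `L` to `x ∂ₓ`, as `x y` is a
first integral. Flat data stay smooth and flat on `x = 0` after division by any power of `x`, even
though the inverse `y = u / x` of the coordinate change is singular. So, after division by `x` and a
change of time, the field becomes `∂ₓ + B` with `B` flat on `x = 0`, and the equation is solved by
integration along characteristics issued from `x = 0`. The data vanish for `|u| ≥ 2x²`. Near the
origin `B` is so small that a characteristic ending in this region lies in it all the way back to
`x = 0`, so the solution vanishes there too. It is therefore flat at the origin, and can be pulled
back with the weight `x ^ μ` which absorbs the zeroth-order term of the equation.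

Averaging `ψ` over the reflections of `z₁` and `z₂` makes it equivariant, and `Dψ(0) = 1` makes it a
local diffeomorphism.
-/

universe u

/-! ### Smooth dependence of flows on initial values -/

section Superposition

open Metric Filter Topology

variable {K : Type*} [TopologicalSpace K] [CompactSpace K]
variable {E G : Type u} [NormedAddCommGroup E] [NormedSpace ℝ E]
  [NormedAddCommGroup G] [NormedSpace ℝ G]

variable (K E G) in
/-- Pointwise application of a curve of operators to a curve of vectors, as a continuous bilinear
map: it is how the derivative of a superposition operator acts. -/
noncomputable def pointwiseApply : C(K, E →L[ℝ] G) →L[ℝ] C(K, E) →L[ℝ] C(K, G) :=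
  LinearMap.mkContinuous₂
    (LinearMap.mk₂ ℝ (fun (A : C(K, E →L[ℝ] G)) (q : C(K, E)) =>
        (⟨fun s => A s (q s), A.continuous.clm_apply q.continuous⟩ : C(K, G)))
      (by intros; ext; simp) (by intros; ext; simp) (by intros; ext; simp) (by intros; ext; simp))
    1 fun A q => by
      refine (ContinuousMap.norm_le _ (by positivity)).2 fun s => ?_
      rw [one_mul]
      exact (A s).le_of_opNorm_le_of_le (A.norm_coe_le_norm s) (q.norm_coe_le_norm s)

lemma hasFDerivAt_superposition {V : C(E, G)} {V' : C(E, E →L[ℝ] G)}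
    (hV : ∀ z, HasFDerivAt V (V' z) z) (q : C(K, E)) :
    HasFDerivAt (fun p : C(K, E) => V.comp p) (pointwiseApply K E G (V'.comp q)) q := by
  rw [hasFDerivAt_iff_isLittleO, Asymptotics.isLittleO_iff]
  intro c hc
  have hclose : ∀ᶠ p in 𝓝 q, dist (V'.comp p) (V'.comp q) < c :=
    V'.continuous_postcomp.continuousAt.eventually (ball_mem_nhds (V'.comp q) hc)
  obtain ⟨δ, hδ, hball⟩ := eventually_nhds_iff_ball.1 hclose
  filter_upwards [ball_mem_nhds q hδ] with p hp
  refine (ContinuousMap.norm_le _ (by positivity)).2 fun s => ?_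
  have hbound : ∀ x ∈ segment ℝ (q s) (p s), ‖V' x - V' (q s)‖ ≤ c := by
    rw [segment_eq_image']
    rintro _ ⟨a, ha, rfl⟩
    have hmem : q + a • (p - q) ∈ ball q δ :=
      (convex_ball q δ).add_smul_sub_mem (mem_ball_self hδ) hp ha
    rw [← dist_eq_norm]
    exact (ContinuousMap.dist_apply_le_dist s).trans (hball _ hmem).le
  calc ‖V (p s) - V (q s) - V' (q s) (p s - q s)‖ ≤ c * ‖p s - q s‖ :=
        (convex_segment _ _).norm_image_sub_le_of_norm_hasFDerivWithin_le'
          (fun x _ => (hV x).hasFDerivWithinAt) hbound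
          (left_mem_segment ℝ _ _) (right_mem_segment ℝ _ _)
    _ ≤ c * ‖p - q‖ := by gcongr; exact (p - q).norm_coe_le_norm s

lemma contDiff_superposition_nat (n : ℕ) :
    ∀ {G : Type u} [NormedAddCommGroup G] [NormedSpace ℝ G] (V : C(E, G)), ContDiff ℝ ∞ V →
      ContDiff ℝ n fun q : C(K, E) => V.comp q := by
  induction n with
  | zero => exact fun V _ => contDiff_zero.2 V.continuous_postcomp
  | succ n ih =>
    intro G _ _ V hV
    have hV' : ContDiff ℝ ∞ (fderiv ℝ V) := hV.fderiv_right (by simp)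
    exact contDiff_succ_iff_hasFDerivAt.2 ⟨_,
      (pointwiseApply K E G).contDiff.comp (ih ⟨fderiv ℝ V, hV'.continuous⟩ hV'),
      hasFDerivAt_superposition fun z => (hV.differentiable (by simp) z).hasFDerivAt⟩

lemma contDiff_superposition {V : C(E, G)} (hV : ContDiff ℝ ∞ V) :
    ContDiff ℝ ∞ fun q : C(K, E) => V.comp q :=
  contDiff_infty.2 fun n => contDiff_superposition_nat n V hV

end Superposition

section FixedPoint

open Filter Topology
open scoped NNReal

lemma contDiffAt_fixedPoint {P B : Type*} [NormedAddCommGroup P] [NormedSpace ℝ P]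
    [CompleteSpace P] [NormedAddCommGroup B] [NormedSpace ℝ B] [CompleteSpace B]
    {f : P × B → B} {Q : P → B} {p : P} {κ : ℝ≥0} (hf : ContDiffAt ℝ ∞ f (p, Q p)) (hκ : κ < 1)
    (hlip : LipschitzWith κ fun q => f (p, q)) (hfix : f (p, Q p) = Q p)
    (huniq : ∀ᶠ p' in 𝓝 p, ∀ q, f (p', q) = q → q = Q p') : ContDiffAt ℝ ∞ Q p := by
  set F : P × B → B := fun x => x.2 - f x
  have hF : ContDiffAt ℝ ∞ F (p, Q p) := contDiffAt_snd.sub hf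
  have hpartial : fderiv ℝ F (p, Q p) ∘L .inr ℝ P B = 1 - fderiv ℝ (fun q => f (p, q)) (Q p) := by
    have hinr : HasFDerivAt (fun q => (p, q)) (.inr ℝ P B) (Q p) := hasFDerivAt_prodMk_right p (Q p)
    have hfq := (hf.differentiableAt (by simp)).hasFDerivAt.comp (Q p) hinr
    exact ((hF.differentiableAt (by simp)).hasFDerivAt.comp (Q p) hinr).unique
      ((hasFDerivAt_id (Q p)).sub hfq.differentiableAt.hasFDerivAt)
  have hinv : (fderiv ℝ F (p, Q p) ∘L .inr ℝ P B).IsInvertible := by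
    obtain ⟨u, hu⟩ := isUnit_one_sub_of_norm_lt_one
      ((norm_fderiv_le_of_lipschitz ℝ (x₀ := Q p) hlip).trans_lt hκ)
    exact ⟨.ofUnit u, hu.trans hpartial.symm⟩
  refine (hF.contDiffAt_implicitFunction (by simp) hinv).congr_of_eventuallyEq ?_
  filter_upwards [hF.eventually_apply_implicitFunction (by simp) hinv, huniq] with p' hp' hu
  refine (hu _ (sub_eq_zero.1 (hp'.trans (sub_eq_zero.2 hfix.symm))).symm).symm

end FixedPoint

section Picard

open Filter Set Topology
open scoped NNReal

variable {E : Type u} [NormedAddCommGroup E]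

/-- Constant extension of a curve on `[-1, 1]` to the real line, used to integrate it. -/
noncomputable def extendCurve (q : C(Icc (-1 : ℝ) 1, E)) : C(ℝ, E) :=
  q.IccExtend (by norm_num)

lemma extendCurve_of_mem (q : C(Icc (-1 : ℝ) 1, E)) {τ : ℝ} (h : τ ∈ Icc (-1 : ℝ) 1) :
    extendCurve q τ = q ⟨τ, h⟩ :=
  IccExtend_of_mem _ _ h

variable [NormedSpace ℝ E]

variable (E) in
/-- The primitive vanishing at `0`, as an operator on curves on `[-1, 1]`. -/
noncomputable def primitive : C(Icc (-1 : ℝ) 1, E) →L[ℝ] C(Icc (-1 : ℝ) 1, E) :=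
  LinearMap.mkContinuous
    { toFun := fun q => ⟨fun s => ∫ τ in (0 : ℝ)..s, extendCurve q τ,
        (intervalIntegral.continuous_primitive
          (fun a b => (extendCurve q).continuous.intervalIntegrable a b) 0).comp
          continuous_subtype_val⟩
      map_add' := fun p q => by
        ext s
        exact intervalIntegral.integral_add ((extendCurve p).continuous.intervalIntegrable _ _)
          ((extendCurve q).continuous.intervalIntegrable _ _)
      map_smul' := fun c q => by
        ext s
        exact intervalIntegral.integral_smul c (extendCurve q) }
    1 fun q => by
      refine (ContinuousMap.norm_le _ (by positivity)).2 fun s => ?_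
      have hs : |(s : ℝ) - 0| ≤ 1 := by simpa using abs_le.2 s.2
      calc ‖∫ τ in (0 : ℝ)..s, extendCurve q τ‖ ≤ ‖q‖ * |(s : ℝ) - 0| :=
            intervalIntegral.norm_integral_le_of_norm_le_const fun τ _ => q.norm_coe_le_norm _
        _ ≤ 1 * ‖q‖ := by rw [mul_comm]; gcongr

variable (E) in
lemma norm_primitive_le : ‖primitive E‖ ≤ 1 :=
  LinearMap.mkContinuous_norm_le _ zero_le_one _

/-- The Picard operator of the autonomous equation `q' = t • V q`, `q 0 = z`, at the parameter
`x = (t, z)`. Rescaling time to `[-1, 1]` makes the time `t` an ordinary parameter, so that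
smoothness in `t` and in `z` are obtained together. -/
noncomputable def picard (V : C(E, E)) (x : ℝ × E) (q : C(Icc (-1 : ℝ) 1, E)) :
    C(Icc (-1 : ℝ) 1, E) :=
  .const _ x.2 + x.1 • primitive E (V.comp q)

lemma picard_apply (V : C(E, E)) (x : ℝ × E) (q : C(Icc (-1 : ℝ) 1, E)) (s : Icc (-1 : ℝ) 1) :
    picard V x q s = x.2 + x.1 • ∫ τ in (0 : ℝ)..s, V (extendCurve q τ) := rfl

lemma contDiff_picard {V : C(E, E)} (hV : ContDiff ℝ ∞ V) :
    ContDiff ℝ ∞ fun y : (ℝ × E) × C(Icc (-1 : ℝ) 1, E) => picard V y.1 y.2 := by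
  have hconst : ContDiff ℝ ∞ (ContinuousMap.const (Icc (-1 : ℝ) 1) : E → C(_, E)) :=
    IsBoundedLinearMap.contDiff
      (IsLinearMap.with_bound ⟨fun _ _ => rfl, fun _ _ => rfl⟩ 1 fun z =>
        (ContinuousMap.norm_le _ (by positivity)).2 fun _ => (one_mul ‖z‖).ge)
  have hsuper := contDiff_superposition (K := Icc (-1 : ℝ) 1) hV
  unfold picard
  exact (hconst.comp contDiff_fst.snd).add
    (contDiff_fst.fst.smul ((primitive E).contDiff.comp (hsuper.comp contDiff_snd)))

lemma contractingWith_picard {V : C(E, E)} {K : ℝ≥0} (hV : LipschitzWith K V) {x : ℝ × E}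
    (hx : |x.1| < 1 / (K + 1)) : ContractingWith (‖x.1‖₊ * K) (picard V x) := by
  constructor
  · rw [lt_div_iff₀ (by positivity)] at hx
    rw [← NNReal.coe_lt_coe]
    push_cast
    rw [Real.norm_eq_abs]
    nlinarith [abs_nonneg x.1]
  refine LipschitzWith.of_dist_le_mul fun p q => ?_
  have hVpq : dist (V.comp p) (V.comp q) ≤ K * dist p q :=
    (ContinuousMap.dist_le (by positivity)).2 fun s =>
      (hV.dist_le_mul _ _).trans (by gcongr; exact ContinuousMap.dist_apply_le_dist s)
  calc dist (picard V x p) (picard V x q)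
      = ‖x.1‖ * ‖primitive E (V.comp p - V.comp q)‖ := by
        rw [picard, picard, dist_add_left, dist_eq_norm, ← smul_sub, ← map_sub, norm_smul]
    _ ≤ ‖x.1‖ * (K * dist p q) := by
        gcongr
        refine ((primitive E).le_of_opNorm_le (norm_primitive_le E) _).trans ?_
        rwa [one_mul, ← dist_eq_norm]
    _ = _ := by push_cast; rw [mul_assoc]

/-- Reparametrization of a curve on `[-1, 1]` by `σ ↦ s * σ`, for `|s| ≤ 1`. -/
noncomputable def rescaleCurve (q : C(Icc (-1 : ℝ) 1, E)) (s : ℝ) : C(Icc (-1 : ℝ) 1, E) :=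
  ⟨fun σ => extendCurve q (s * σ), by fun_prop⟩

lemma picard_rescaleCurve {V : C(E, E)} {t : ℝ} {z : E} {q : C(Icc (-1 : ℝ) 1, E)}
    (hq : picard V (t, z) q = q) {s : ℝ} (hs : |s| ≤ 1) :
    picard V (t * s, z) (rescaleCurve q s) = rescaleCurve q s := by
  ext σ
  have hmem {τ : ℝ} (hτ : |τ| ≤ 1) : s * τ ∈ Icc (-1 : ℝ) 1 :=
    abs_le.1 (abs_mul s τ ▸ mul_le_one₀ hs (abs_nonneg _) hτ)
  have hcurve : EqOn (fun τ => V (extendCurve (rescaleCurve q s) τ))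
      (fun τ => V (extendCurve q (s * τ))) (uIcc 0 (σ : ℝ)) := fun τ hτ => by
    have hτ : τ ∈ Icc (-1 : ℝ) 1 := ordConnected_Icc.uIcc_subset (by norm_num) σ.2 hτ
    simp only [extendCurve_of_mem _ hτ]
    rfl
  calc picard V (t * s, z) (rescaleCurve q s) σ
      = z + t • ∫ τ in (0 : ℝ)..s * σ, V (extendCurve q τ) := by
        rw [picard_apply, intervalIntegral.integral_congr hcurve, mul_smul,
          intervalIntegral.smul_integral_comp_mul_left (fun τ => V (extendCurve q τ)), mul_zero]
    _ = q ⟨s * σ, hmem (abs_le.2 σ.2)⟩ := by rw [← DFunLike.congr_fun hq, picard_apply]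
    _ = rescaleCurve q s σ := (extendCurve_of_mem _ _).symm

end Picard

section Flow

open Filter Set Topology
open scoped NNReal

variable {E : Type*} [NormedAddCommGroup E] [NormedSpace ℝ E]

/-- `φ` is the flow of the vector field `V` for times in `(-ε, ε)`, smooth jointly in time and in
the initial point. -/
structure IsLocalFlow (V : E → E) (ε : ℝ) (φ : ℝ × E → E) : Prop where
  contDiffOn : ContDiffOn ℝ ∞ φ {x | |x.1| < ε}
  map_zero : ∀ z, φ (0, z) = z
  hasDerivAt : ∀ z t, |t| < ε → HasDerivAt (fun s => φ (s, z)) (V (φ (t, z))) t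

lemma isOpen_abs_fst_lt {E : Type*} [TopologicalSpace E] (ε : ℝ) : IsOpen {x : ℝ × E | |x.1| < ε} :=
  isOpen_lt (by fun_prop) continuous_const

section Existence

variable [CompleteSpace E]

lemma hasDerivAt_extendCurve {V : C(E, E)} {t : ℝ} {z : E} {q : C(Icc (-1 : ℝ) 1, E)}
    (hq : picard V (t, z) q = q) {s : ℝ} (hs : |s| < t) :
    HasDerivAt (fun r => extendCurve q (r / t)) (V (extendCurve q (s / t))) s := by
  have ht : 0 < t := (abs_nonneg s).trans_lt hs
  have hmem {r : ℝ} (hr : |r| < t) : r / t ∈ Icc (-1 : ℝ) 1 := by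
    rw [mem_Icc, ← abs_le, abs_div, abs_of_pos ht]
    exact (div_le_one ht).2 hr.le
  have hcont : Continuous fun τ => V (extendCurve q τ) := by fun_prop
  have hint : HasDerivAt (fun r => z + t • ∫ τ in (0 : ℝ)..r / t, V (extendCurve q τ))
      (V (extendCurve q (s / t))) s := by
    refine (((hcont.integral_hasStrictDerivAt 0 (s / t)).hasDerivAt.scomp s
      ((hasDerivAt_id s).div_const t)).const_smul t).const_add z |>.congr_deriv ?_
    rw [smul_smul, mul_one_div_cancel ht.ne', one_smul]
  refine hint.congr_of_eventuallyEq ?_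
  filter_upwards [continuous_abs.continuousAt.eventually_lt_const hs] with r hr
  rw [extendCurve_of_mem q (hmem hr), ← DFunLike.congr_fun hq, picard_apply]

theorem exists_isLocalFlow {V : E → E} (hV : ContDiff ℝ ∞ V) {K : ℝ≥0} (hK : LipschitzWith K V) :
    ∃ ε > 0, ∃ φ, IsLocalFlow V ε φ := by
  lift V to C(E, E) using hK.continuous
  set ε : ℝ := 1 / (K + 1)
  have hcontr {x : ℝ × E} (hx : |x.1| < ε) := contractingWith_picard hK hx
  have hex (x : ℝ × E) : ∃ q, |x.1| < ε → picard V x q = q := by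
    by_cases hx : |x.1| < ε
    · exact ⟨_, fun _ => (hcontr hx).fixedPoint_isFixedPt⟩
    · exact ⟨0, fun h => absurd h hx⟩
  choose Q hQ using hex
  have huniq {x : ℝ × E} (hx : |x.1| < ε) {q} (hq : picard V x q = q) : q = Q x :=
    (hcontr hx).fixedPoint_unique' hq (hQ x hx)
  have hQsmooth (x : ℝ × E) (hx : |x.1| < ε) : ContDiffAt ℝ ∞ Q x :=
    contDiffAt_fixedPoint (contDiff_picard hV).contDiffAt (hcontr hx).1 (hcontr hx).2 (hQ x hx)
      (mem_of_superset ((isOpen_abs_fst_lt ε).mem_nhds hx) fun _ hx' _ => huniq hx')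
  have hε : 0 < ε := by positivity
  refine ⟨ε, hε, fun x => extendCurve (Q x) 1, fun x hx => ?_, fun z => ?_,
    fun z t ht => ?_⟩
  · have heval : ContDiff ℝ ∞ fun q : C(Icc (-1 : ℝ) 1, E) => extendCurve q 1 :=
      (ContinuousMap.evalCLM ℝ (projIcc (-1 : ℝ) 1 (by norm_num) 1) : C(_, E) →L[ℝ] E).contDiff
    exact (heval.contDiffAt.comp x (hQsmooth x hx)).contDiffWithinAt
  · rw [extendCurve_of_mem _ (by norm_num), ← DFunLike.congr_fun (hQ (0, z) (by simpa using hε)),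
      picard_apply, zero_smul, add_zero]
  obtain ⟨t', htt', ht'ε⟩ := exists_between ht
  have ht' : 0 < t' := (abs_nonneg t).trans_lt htt'
  have hfix := hQ (t', z) (by rwa [abs_of_pos ht'])
  have hflow {s : ℝ} (hs : |s| < t') :
      extendCurve (Q (s, z)) 1 = extendCurve (Q (t', z)) (s / t') := by
    have hs1 : |s / t'| ≤ 1 := by rw [abs_div, abs_of_pos ht']; exact (div_le_one ht').2 hs.le
    have hr := picard_rescaleCurve hfix hs1
    rw [mul_div_cancel₀ _ ht'.ne'] at hr
    rw [← huniq (hs.trans ht'ε) hr, extendCurve_of_mem _ (by norm_num)]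
    exact congrArg (extendCurve (Q (t', z))) (mul_one _)
  rw [hflow htt']
  refine (hasDerivAt_extendCurve hfix htt').congr_of_eventuallyEq ?_
  filter_upwards [continuous_abs.continuousAt.eventually_lt_const htt'] with s hs using hflow hs

end Existence

lemma eq_of_hasDerivAt_of_lipschitzWith {v : ℝ → E → E} {K : ℝ≥0} {c d : ℝ → E} {t₀ t : ℝ}
    (hv : ∀ s, LipschitzWith K (v s)) (h₀ : c t₀ = d t₀)
    (hc : ∀ s ∈ uIcc t₀ t, HasDerivAt c (v s (c s)) s)
    (hd : ∀ s ∈ uIcc t₀ t, HasDerivAt d (v s (d s)) s) : c t = d t := by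
  have hcont {c : ℝ → E} (hc : ∀ s ∈ uIcc t₀ t, HasDerivAt c (v s (c s)) s) :
      ContinuousOn c (uIcc t₀ t) := fun s hs => (hc s hs).continuousAt.continuousWithinAt
  have hcc := hcont hc
  have hdc := hcont hd
  rcases le_total t₀ t with h | h
  · rw [uIcc_of_le h] at *
    exact ODE_solution_unique_of_mem_Icc_right (s := fun _ => univ)
      (fun s _ => (hv s).lipschitzOnWith)
      hcc (fun s hs => (hc s (Ico_subset_Icc_self hs)).hasDerivWithinAt) (fun _ _ => mem_univ _)
      hdc (fun s hs => (hd s (Ico_subset_Icc_self hs)).hasDerivWithinAt) (fun _ _ => mem_univ _)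
      h₀ (right_mem_Icc.2 h)
  · rw [uIcc_of_ge h] at *
    exact ODE_solution_unique_of_mem_Icc_left (s := fun _ => univ)
      (fun s _ => (hv s).lipschitzOnWith)
      hcc (fun s hs => (hc s (Ioc_subset_Icc_self hs)).hasDerivWithinAt) (fun _ _ => mem_univ _)
      hdc (fun s hs => (hd s (Ioc_subset_Icc_self hs)).hasDerivWithinAt) (fun _ _ => mem_univ _)
      h₀ (left_mem_Icc.2 h)

namespace IsLocalFlow

variable {V : E → E} {ε : ℝ} {φ : ℝ × E → E} {K : ℝ≥0}

lemma map_add (hφ : IsLocalFlow V ε φ) (hV : LipschitzWith K V) {s t : ℝ} (hs : |s| < ε)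
    (ht : |t| < ε) (hst : |s + t| < ε) (z : E) : φ (s, φ (t, z)) = φ (s + t, z) := by
  refine eq_of_hasDerivAt_of_lipschitzWith (t₀ := 0) (c := fun r => φ (r, φ (t, z)))
    (d := fun r => φ (r + t, z)) (fun _ => hV) (by simp [hφ.map_zero]) (fun r hr => ?_)
    fun r hr => ?_
  · exact hφ.hasDerivAt _ r (lt_of_le_of_lt (by simpa using abs_sub_left_of_mem_uIcc hr) hs)
  · have hrt : |r + t| < ε := by
      rcases mem_uIcc.1 hr with hr | hr <;> grind
    exact (hφ.hasDerivAt z (r + t) hrt).comp_add_const r t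

lemma fst {Z : Type*} [NormedAddCommGroup Z] [NormedSpace ℝ Z] {G : E × Z → Z}
    {φ : ℝ × (E × Z) → E × Z} (hφ : IsLocalFlow (fun x => (V x.1, G x)) ε φ) (y : Z) :
    IsLocalFlow V ε fun x => (φ (x.1, (x.2, y))).1 where
  contDiffOn := by
    have hincl : ContDiff ℝ ∞ fun x : ℝ × E => (x.1, (x.2, y)) := by fun_prop
    exact contDiff_fst.comp_contDiffOn (hφ.contDiffOn.comp hincl.contDiffOn fun _ hx => hx)
  map_zero z := by rw [hφ.map_zero]
  hasDerivAt z t ht := (hφ.hasDerivAt (z, y) t ht).fst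

lemma fst_eq_add {B : ℝ × E → E} {φ : ℝ × (ℝ × E) → ℝ × E}
    (hφ : IsLocalFlow (fun z => (1, B z)) ε φ) {t : ℝ} (ht : |t| < ε) (z : ℝ × E) :
    (φ (t, z)).1 = z.1 + t := by
  refine eq_of_hasDerivAt_of_lipschitzWith (t₀ := 0) (c := fun s => (φ (s, z)).1)
    (d := fun s => z.1 + s) (v := fun _ _ => 1) (fun _ => LipschitzWith.const (1 : ℝ))
    (by simp [hφ.map_zero]) (fun s hs => ?_) fun s _ => (hasDerivAt_id s).const_add _
  exact (hφ.hasDerivAt z s (lt_of_le_of_lt (by simpa using abs_sub_left_of_mem_uIcc hs) ht)).fst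

end IsLocalFlow
end Flow

section Transport

open Filter Set Topology
open scoped NNReal

variable {E Z : Type*} [NormedAddCommGroup E] [NormedSpace ℝ E]
  [NormedAddCommGroup Z]

/-- The motion of the base point under the flow `φ` of a skew product `(1, B z, G (z, y))`. -/
def baseFlow (φ : ℝ × ((ℝ × E) × Z) → (ℝ × E) × Z) (x : ℝ × (ℝ × E)) : ℝ × E :=
  (φ (x.1, (x.2, 0))).1

/-- The method of characteristics: the solution of `Dh(z)(1, B z) = G (z, h z)` vanishing at time
`0`, read off the flow `φ` of the skew product `(1, B z, G (z, y))`. -/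
def transportSolution (φ : ℝ × ((ℝ × E) × Z) → (ℝ × E) × Z) (z : ℝ × E) : Z :=
  (φ (z.1, (baseFlow φ (-z.1, z), 0))).2

variable [NormedSpace ℝ Z] {B : ℝ × E → E} {G : (ℝ × E) × Z → Z} {ε : ℝ} {K : ℝ≥0}
  {φ : ℝ × ((ℝ × E) × Z) → (ℝ × E) × Z}

lemma isLocalFlow_baseFlow (hφ : IsLocalFlow (fun x => ((1, B x.1), G x)) ε φ) :
    IsLocalFlow (fun z => (1, B z)) ε (baseFlow φ) :=
  IsLocalFlow.fst (V := fun z => (1, B z)) hφ 0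

lemma baseFlow_add (hφ : IsLocalFlow (fun x => ((1, B x.1), G x)) ε φ) (hB : LipschitzWith K B)
    {s t : ℝ} (hs : |s| < ε) (ht : |t| < ε) (hst : |s + t| < ε) (z : ℝ × E) :
    baseFlow φ (s, baseFlow φ (t, z)) = baseFlow φ (s + t, z) :=
  (isLocalFlow_baseFlow hφ).map_add ((LipschitzWith.const 1).prodMk hB) hs ht hst z

lemma transportSolution_baseFlow (hφ : IsLocalFlow (fun x => ((1, B x.1), G x)) ε φ)
    (hB : LipschitzWith K B) {z : ℝ × E} (hz : |z.1| < ε) {s : ℝ} (hs : |s| < ε)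
    (hsz : |s - z.1| < ε) :
    transportSolution φ (baseFlow φ (s - z.1, z)) = (φ (s, (baseFlow φ (-z.1, z), 0))).2 := by
  have htime : (baseFlow φ (s - z.1, z)).1 = s := by
    rw [(isLocalFlow_baseFlow hφ).fst_eq_add hsz]; ring
  have hfoot : -s + (s - z.1) = -z.1 := by ring
  rw [transportSolution, htime, baseFlow_add hφ hB (by rwa [abs_neg]) hsz
    (by rwa [hfoot, abs_neg]), hfoot]

lemma flow_eq_transportSolution (hφ : IsLocalFlow (fun x => ((1, B x.1), G x)) ε φ)
    (hB : LipschitzWith K B) {z : ℝ × E} (hz : |z.1| < ε) :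
    φ (z.1, (baseFlow φ (-z.1, z), 0)) = (z, transportSolution φ z) := by
  refine Prod.ext ?_ rfl
  change baseFlow φ (z.1, baseFlow φ (-z.1, z)) = z
  rw [baseFlow_add hφ hB hz (by rwa [abs_neg]) (by simpa using (abs_nonneg _).trans_lt hz),
    add_neg_cancel, (isLocalFlow_baseFlow hφ).map_zero]

lemma contDiffOn_transportSolution (hφ : IsLocalFlow (fun x => ((1, B x.1), G x)) ε φ) :
    ContDiffOn ℝ ∞ (transportSolution φ) {z | |z.1| < ε} := by
  have hfoot : ContDiffOn ℝ ∞ (fun z : ℝ × E => baseFlow φ (-z.1, z)) {z | |z.1| < ε} :=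
    (isLocalFlow_baseFlow hφ).contDiffOn.comp (ContDiff.contDiffOn (by fun_prop))
      fun z hz => by simpa using hz
  exact contDiff_snd.comp_contDiffOn (hφ.contDiffOn.comp
    (contDiffOn_fst.prodMk (hfoot.prodMk contDiffOn_const)) fun z hz => hz)

lemma fderiv_transportSolution_apply (hφ : IsLocalFlow (fun x => ((1, B x.1), G x)) ε φ)
    (hB : LipschitzWith K B) {z : ℝ × E} (hz : |z.1| < ε) :
    fderiv ℝ (transportSolution φ) z (1, B z) = G (z, transportSolution φ z) := by
  have hε : |z.1 - z.1| < ε := by simpa using (abs_nonneg _).trans_lt hz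
  have hbase := isLocalFlow_baseFlow hφ
  have hz₀ : baseFlow φ (z.1 - z.1, z) = z := by rw [sub_self, hbase.map_zero]
  have hchar : HasDerivAt (fun s => baseFlow φ (s - z.1, z)) (1, B z) z.1 := by
    have h := (hbase.hasDerivAt z _ hε).comp_sub_const z.1 z.1
    rwa [hz₀] at h
  have hlift : HasDerivAt (fun s => (φ (s, (baseFlow φ (-z.1, z), 0))).2)
      (G (z, transportSolution φ z)) z.1 := by
    have h := (hφ.hasDerivAt (baseFlow φ (-z.1, z), 0) z.1 hz).snd
    rwa [flow_eq_transportSolution hφ hB hz] at h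
  have hcomp : (fun s => transportSolution φ (baseFlow φ (s - z.1, z))) =ᶠ[𝓝 z.1]
      fun s => (φ (s, (baseFlow φ (-z.1, z), 0))).2 := by
    have hsub : ContinuousAt (fun s => |s - z.1|) z.1 := by fun_prop
    filter_upwards [continuous_abs.continuousAt.eventually_lt_const hz,
      hsub.eventually_lt_const hε] with s hs hsz
    exact transportSolution_baseFlow hφ hB hz hs hsz
  have hdiff : HasFDerivAt (transportSolution φ) (fderiv ℝ (transportSolution φ) z) z :=
    (((contDiffOn_transportSolution hφ).contDiffAt
      ((isOpen_abs_fst_lt ε).mem_nhds hz)).differentiableAt (by simp)).hasFDerivAt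
  exact (HasFDerivAt.comp_hasDerivAt_of_eq z.1 hdiff hchar hz₀.symm).unique
    (hlift.congr_of_eventuallyEq hcomp)

theorem exists_transport [CompleteSpace E] [CompleteSpace Z] (hB : ContDiff ℝ ∞ B)
    (hG : ContDiff ℝ ∞ G) (hBK : LipschitzWith K B) {K' : ℝ≥0} (hGK : LipschitzWith K' G) :
    ∃ ε > 0, ∃ h : ℝ × E → Z, ContDiffOn ℝ ∞ h {z | |z.1| < ε} ∧ (∀ p, h (0, p) = 0) ∧
      (∀ z : ℝ × E, |z.1| < ε → fderiv ℝ h z (1, B z) = G (z, h z)) ∧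
      ∀ t p, |t| < ε → ∃ γ : ℝ → E, γ t = p ∧ ∀ s ∈ uIcc 0 t, HasDerivAt γ (B (s, γ s)) s := by
  have hV : ContDiff ℝ ∞ fun x : (ℝ × E) × Z => (((1 : ℝ), B x.1), G x) := by fun_prop
  have hVK : LipschitzWith _ fun x : (ℝ × E) × Z => (((1 : ℝ), B x.1), G x) :=
    ((LipschitzWith.const 1).prodMk (hBK.comp LipschitzWith.prod_fst)).prodMk hGK
  obtain ⟨ε, hε, φ, hφ⟩ := exists_isLocalFlow hV hVK
  have hbase := isLocalFlow_baseFlow hφ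
  refine ⟨ε, hε, transportSolution φ, contDiffOn_transportSolution hφ, fun p => ?_,
    fun z hz => fderiv_transportSolution_apply hφ hBK hz, fun t p ht =>
    ⟨fun s => (baseFlow φ (s - t, (t, p))).2, by simp [hbase.map_zero], fun s hs => ?_⟩⟩
  · rw [transportSolution, hφ.map_zero]
  have hst : |s - t| < ε := by
    rw [abs_sub_comm]
    exact lt_of_le_of_lt (by simpa using abs_sub_right_of_mem_uIcc hs) ht
  have htime : baseFlow φ (s - t, (t, p)) = (s, (baseFlow φ (s - t, (t, p))).2) :=
    Prod.ext (by rw [hbase.fst_eq_add hst]; ring) rfl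
  have h := ((hbase.hasDerivAt (t, p) (s - t) hst).comp_sub_const s t).snd
  rwa [htime] at h

lemma transport_eq_zero_of_characteristic {γ : ℝ → E} {t : ℝ} {h : ℝ × E → Z}
    (hG : LipschitzWith K G) (hh : ∀ s ∈ uIcc 0 t, DifferentiableAt ℝ h (s, γ s))
    (hpde : ∀ s ∈ uIcc 0 t, fderiv ℝ h (s, γ s) (1, B (s, γ s)) = G ((s, γ s), h (s, γ s)))
    (hγ : ∀ s ∈ uIcc 0 t, HasDerivAt γ (B (s, γ s)) s) (h₀ : h (0, γ 0) = 0)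
    (hG₀ : ∀ s ∈ uIcc 0 t, G ((s, γ s), 0) = 0) : h (t, γ t) = 0 := by
  refine eq_of_hasDerivAt_of_lipschitzWith (t₀ := 0) (c := fun s => h (s, γ s)) (d := fun _ => 0)
    (v := fun s y => G ((s, γ s), y)) (K := K) (fun s => ?_) h₀ (fun s hs => ?_) fun s hs => ?_
  · exact mul_one K ▸ hG.comp (LipschitzWith.prodMk_left (s, γ s))
  · rw [← hpde s hs]
    exact (hh s hs).hasFDerivAt.comp_hasDerivAt s ((hasDerivAt_id s).prodMk (hγ s hs))
  · rw [hG₀ s hs]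
    exact hasDerivAt_const s 0

end Transport

/-! ### Flat functions -/

section Flat

open Set Filter Topology

variable {A A' G G' : Type*} [NormedAddCommGroup A] [NormedSpace ℝ A]
  [NormedAddCommGroup A'] [NormedSpace ℝ A'] [NormedAddCommGroup G] [NormedSpace ℝ G]
  [NormedAddCommGroup G'] [NormedSpace ℝ G'] {k l : A → G} {z : A} {S : Set A}

/-- Flatness at a point: all iterated derivatives, including the value itself, vanish there. -/
def FlatAt (k : A → G) (z : A) : Prop :=
  ∀ j : ℕ, iteratedFDeriv ℝ j k z = 0

lemma FlatAt.apply_eq_zero (h : FlatAt k z) : k z = 0 := by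
  rw [← norm_eq_zero, ← norm_iteratedFDeriv_zero (𝕜 := ℝ), h 0, norm_zero]

lemma FlatAt.fderiv (h : FlatAt k z) : FlatAt (fderiv ℝ k) z := fun j => by
  rw [← norm_eq_zero, norm_iteratedFDeriv_fderiv, h (j + 1), norm_zero]

lemma FlatAt.add (h : FlatAt k z) (h' : FlatAt l z) (hk : ContDiff ℝ ∞ k) (hl : ContDiff ℝ ∞ l) :
    FlatAt (fun y => k y + l y) z := fun j => by
  rw [fun_iteratedFDeriv_add_apply (contDiff_infty.1 hk j).contDiffAt
    (contDiff_infty.1 hl j).contDiffAt, h j, h' j, add_zero]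

lemma FlatAt.comp {f : A' → A} {z : A'} (h : FlatAt k (f z)) (hk : ContDiffAt ℝ ∞ k (f z))
    (hf : ContDiffAt ℝ ∞ f z) : FlatAt (fun y => k (f y)) z := fun j => by
  have hzero : ∀ c : OrderedFinpartition j, (ftaylorSeries ℝ k (f z)).compAlongOrderedFinpartition
      (ftaylorSeries ℝ f z) c = 0 := fun c => by
    ext v
    simp [FormalMultilinearSeries.compAlongOrderedFinpartition_apply, ftaylorSeries, h c.length]
  refine (iteratedFDeriv_comp (𝕜 := ℝ) hk hf (mod_cast le_top)).trans ?_
  exact Finset.sum_eq_zero fun c _ => hzero c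

lemma FlatAt.clm_apply {T : A → G →L[ℝ] G'} (h : FlatAt k z) (hT : ContDiff ℝ ∞ T)
    (hk : ContDiff ℝ ∞ k) : FlatAt (fun y => T y (k y)) z := fun j => by
  rw [← norm_le_zero_iff]
  refine (norm_iteratedFDeriv_clm_apply hT hk z (mod_cast le_top)).trans_eq ?_
  exact Finset.sum_eq_zero fun i _ => by rw [h, norm_zero, mul_zero]

lemma flatAt_of_eqOn_zero {O : Set A} (hk : ContDiff ℝ ∞ k) (hO : IsOpen O) (h₀ : EqOn k 0 O)
    (hz : z ∈ closure O) : FlatAt k z := fun j => by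
  have hclosed : IsClosed {y | iteratedFDeriv ℝ j k y = 0} :=
    isClosed_eq (hk.continuous_iteratedFDeriv (mod_cast le_top)) continuous_const
  refine closure_minimal (fun y hy => ?_) hclosed hz
  have hev : k =ᶠ[𝓝 y] fun _ => 0 := h₀.eventuallyEq_of_mem (hO.mem_nhds hy)
  exact (hev.iteratedFDeriv ℝ j).eq_of_nhds.trans (congrFun iteratedFDeriv_fun_zero y)

/-- A test function (smooth, compactly supported) that is flat along `S`. -/
structure IsFlatTest (S : Set A) (k : A → G) : Prop where
  contDiff : ContDiff ℝ ∞ k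
  hasCompactSupport : HasCompactSupport k
  flatAt : ∀ z ∈ S, FlatAt k z

namespace IsFlatTest

lemma fderiv (h : IsFlatTest S k) : IsFlatTest S (fderiv ℝ k) where
  contDiff := h.contDiff.fderiv_right (by simp)
  hasCompactSupport := h.hasCompactSupport.fderiv (𝕜 := ℝ)
  flatAt z hz := (h.flatAt z hz).fderiv

lemma add (h : IsFlatTest S k) (h' : IsFlatTest S l) : IsFlatTest S (fun z => k z + l z) where
  contDiff := h.contDiff.add h'.contDiff
  hasCompactSupport := h.hasCompactSupport.add h'.hasCompactSupport
  flatAt z hz := (h.flatAt z hz).add (h'.flatAt z hz) h.contDiff h'.contDiff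

lemma clm_apply {T : A → G →L[ℝ] G'} (h : IsFlatTest S k) (hT : ContDiff ℝ ∞ T) :
    IsFlatTest S (fun z => T z (k z)) where
  contDiff := hT.clm_apply h.contDiff
  hasCompactSupport := h.hasCompactSupport.mono fun z hz hk => hz (by simp [hk])
  flatAt z hz := (h.flatAt z hz).clm_apply hT h.contDiff

lemma clm (h : IsFlatTest S k) (T : G →L[ℝ] G') : IsFlatTest S (fun z => T (k z)) :=
  h.clm_apply contDiff_const

lemma smul {c : A → ℝ} (h : IsFlatTest S k) (hc : ContDiff ℝ ∞ c) :
    IsFlatTest S (fun z => c z • k z) :=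
  h.clm_apply (T := fun z => c z • ContinuousLinearMap.id ℝ G) (by fun_prop)

lemma comp_equiv (h : IsFlatTest S k) (T : A' ≃L[ℝ] A) :
    IsFlatTest (T ⁻¹' S) (fun z => k (T z)) where
  contDiff := h.contDiff.comp T.contDiff
  hasCompactSupport := h.hasCompactSupport.comp_homeomorph T.toHomeomorph
  flatAt z hz := (h.flatAt (T z) hz).comp h.contDiff.contDiffAt T.contDiff.contDiffAt

end IsFlatTest

end Flat

section RadialCutoff

open Set Filter Topology

variable {E G : Type*} [NormedAddCommGroup E] [NormedSpace ℝ E] [NormedAddCommGroup G]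

theorem exists_contDiff_smul_self_mem [FiniteDimensional ℝ E] {U : Set E}
    (hU : U ∈ 𝓝 0) : ∃ c : E → ℝ, ContDiff ℝ ∞ c ∧ HasCompactSupport c ∧ c =ᶠ[𝓝 0] 1 ∧
      (∀ z, 0 ≤ c z) ∧ ∀ z, c z • z ∈ U := by
  obtain ⟨r, hr, hrU⟩ := Metric.mem_nhds_iff.1 hU
  let ρ : ContDiffBump (0 : E) := ⟨r / 2, r, half_pos hr, half_lt_self hr⟩
  refine ⟨ρ, ρ.contDiff, ρ.hasCompactSupport, ρ.eventuallyEq_one, ρ.nonneg', fun z => hrU ?_⟩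
  rw [mem_ball_zero_iff, norm_smul, Real.norm_of_nonneg (ρ.nonneg' z)]
  rcases lt_or_ge ‖z‖ r with hz | hz
  · exact (mul_le_of_le_one_left (norm_nonneg z) ρ.le_one).trans_lt hz
  · rw [ρ.zero_of_le_dist (by simpa using hz), zero_mul]
    exact hr

lemma hasCompactSupport_comp_smul_self {c : E → ℝ} {k : E → G} (hc : HasCompactSupport c)
    (hk : k 0 = 0) : HasCompactSupport fun z => k (c z • z) :=
  hc.mono fun z hz hcz => hz (by simp [hcz, hk])

end RadialCutoff

section Decay

open Set Filter Topology

variable {F G : Type u} [NormedAddCommGroup F] [NormedSpace ℝ F]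
  [NormedAddCommGroup G] [NormedSpace ℝ G]

lemma exists_norm_le_mul_pow_fst (n : ℕ) {k : ℝ × F → G} (hk : IsFlatTest {z | z.1 = 0} k) :
    ∃ C, 0 ≤ C ∧ ∀ z, ‖k z‖ ≤ C * |z.1| ^ n := by
  induction n generalizing G with
  | zero =>
    obtain ⟨C, hC⟩ := hk.contDiff.continuous.bounded_above_of_compact_support hk.hasCompactSupport
    exact ⟨C, (norm_nonneg _).trans (hC 0), fun z => by simpa using hC z⟩
  | succ n ih =>
    obtain ⟨C, hC₀, hC⟩ := ih hk.fderiv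
    refine ⟨C, hC₀, fun z => ?_⟩
    have hconv : Convex ℝ {y : ℝ × F | y.1 ∈ Icc (-|z.1|) |z.1|} :=
      (convex_Icc (-|z.1|) |z.1|).linear_preimage (LinearMap.fst ℝ ℝ F)
    have hbound : ∀ y ∈ {y : ℝ × F | y.1 ∈ Icc (-|z.1|) |z.1|},
        ‖fderiv ℝ k y‖ ≤ C * |z.1| ^ n := fun y hy =>
      (hC y).trans
        (mul_le_mul_of_nonneg_left (pow_le_pow_left₀ (abs_nonneg _) (abs_le.2 hy) n) hC₀)
    have h := hconv.norm_image_sub_le_of_norm_fderiv_le (x := (0, z.2)) (y := z)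
      (fun y _ => hk.contDiff.differentiable (by simp) y) hbound (by simp)
      (by simp [neg_abs_le, le_abs_self])
    rw [(hk.flatAt (0, z.2) rfl).apply_eq_zero, sub_zero] at h
    refine h.trans_eq ?_
    have hsub : z - (0, z.2) = (z.1, 0) := by ext <;> simp
    rw [hsub, Prod.norm_mk, norm_zero, max_eq_left (norm_nonneg _), Real.norm_eq_abs, pow_succ,
      mul_assoc]

lemma isFlatTest_of_fst_neg {k : ℝ × F → G} (hk : ContDiff ℝ ∞ k) (hkc : HasCompactSupport k)
    (hneg : ∀ z : ℝ × F, z.1 < 0 → k z = 0) : IsFlatTest {z | z.1 = 0} k where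
  contDiff := hk
  hasCompactSupport := hkc
  flatAt z hz := flatAt_of_eqOn_zero hk (isOpen_Iio.preimage continuous_fst) hneg <|
    isOpenMap_fst.preimage_closure_subset_closure_preimage (s := Iio (0 : ℝ)) (by
      rw [mem_preimage, closure_Iio, mem_Iic]
      exact hz.le)

end Decay

section WeightedSubst

variable {F G : Type*} [NormedAddCommGroup G] [NormedSpace ℝ G]

/-- The chart `(x, u, w) ↦ (x, u / xⁱ, w)` of the half space `x > 0`. -/
noncomputable def weightedChart (i : ℕ) (z : ℝ × ℝ × F) : ℝ × ℝ × F :=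
  (z.1, z.2.1 / z.1 ^ i, z.2.2)

/-- The substitution `x⁻ˢ k(x, u / xⁱ, w)`, extended by `0` to `x ≤ 0`. It preserves smoothness
of functions that are flat along `x = 0`; the weight `s` is real. -/
noncomputable def weightedSubst (i : ℕ) (s : ℝ) (k : ℝ × ℝ × F → G) (z : ℝ × ℝ × F) : G :=
  if 0 < z.1 then z.1 ^ (-s) • k (weightedChart i z) else 0

lemma weightedSubst_of_pos (i : ℕ) (s : ℝ) (k : ℝ × ℝ × F → G) {z : ℝ × ℝ × F} (hz : 0 < z.1) :
    weightedSubst i s k z = z.1 ^ (-s) • k (weightedChart i z) :=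
  if_pos hz

lemma weightedSubst_of_nonpos (i : ℕ) (s : ℝ) (k : ℝ × ℝ × F → G) {z : ℝ × ℝ × F}
    (hz : z.1 ≤ 0) : weightedSubst i s k z = 0 :=
  if_neg hz.not_gt

lemma hasCompactSupport_weightedSubst [NormedAddCommGroup F] (i : ℕ) (s : ℝ) {k : ℝ × ℝ × F → G}
    (hk : HasCompactSupport k) : HasCompactSupport (weightedSubst i s k) := by
  have hcont : Continuous fun z : ℝ × ℝ × F => (z.1, z.1 ^ i * z.2.1, z.2.2) := by fun_prop
  refine .intro (hk.isCompact.image hcont) fun z hz => ?_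
  rcases lt_or_ge 0 z.1 with hpos | hneg
  · have hout : weightedChart i z ∉ tsupport k := fun hmem =>
      hz ⟨_, hmem, by simp [weightedChart, mul_div_cancel₀ _ (pow_ne_zero i hpos.ne')]⟩
    rw [weightedSubst_of_pos i s k hpos, image_eq_zero_of_notMem_tsupport hout, smul_zero]
  · exact weightedSubst_of_nonpos i s k hneg

end WeightedSubst

section WeightedSubstSmooth

open Set Filter Topology

variable {F G : Type u} [NormedAddCommGroup F] [NormedSpace ℝ F]
  [NormedAddCommGroup G] [NormedSpace ℝ G]

/-- The Jacobian of `weightedChart i`, multiplied by `xⁱ⁺¹` and expressed in the target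
coordinates: it is polynomial there. -/
noncomputable def scaledJacobian (i : ℕ) (z : ℝ × ℝ × F) : ℝ × ℝ × F →L[ℝ] ℝ × ℝ × F :=
  z.1 ^ (i + 1) • .id ℝ (ℝ × ℝ × F) +
    ((z.1 - z.1 ^ (i + 1)) • (ContinuousLinearMap.fst ℝ ℝ F).comp (.snd ℝ ℝ (ℝ × F)) -
      (i * z.1 ^ i * z.2.1) • .fst ℝ ℝ (ℝ × F)).smulRight ((0, 1, 0) : ℝ × ℝ × F)

lemma hasFDerivAt_weightedChart (i : ℕ) {z : ℝ × ℝ × F} (hz : 0 < z.1) :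
    HasFDerivAt (weightedChart i)
      ((z.1 ^ (i + 1))⁻¹ • scaledJacobian i (weightedChart i z)) z := by
  have hx := (ContinuousLinearMap.fst ℝ ℝ (ℝ × F)).hasFDerivAt (x := z)
  have hu := ((ContinuousLinearMap.fst ℝ ℝ F).comp (.snd ℝ ℝ (ℝ × F))).hasFDerivAt (x := z)
  have hw := ((ContinuousLinearMap.snd ℝ ℝ F).comp (.snd ℝ ℝ (ℝ × F))).hasFDerivAt (x := z)
  have hdiv := hu.mul (((hasDerivAt_pow i z.1).inv (pow_ne_zero i hz.ne')).comp_hasFDerivAt z hx)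
  refine (hx.prodMk (hdiv.prodMk hw)).congr_fderiv ?_
  refine ContinuousLinearMap.ext fun v => ?_
  have hpow : (i : ℝ) * z.1 ^ (i - 1) = i * z.1 ^ i / z.1 := by
    cases i with
    | zero => simp
    | succ i => rw [Nat.add_sub_cancel, pow_succ]; field_simp
  have hz₀ : z.1 ≠ 0 := hz.ne'
  refine Prod.ext ?_ (Prod.ext ?_ ?_)
  · simp [scaledJacobian, weightedChart, hz₀]
  · simp only [scaledJacobian, weightedChart, hpow, ContinuousLinearMap.comp_apply,
      ContinuousLinearMap.coe_snd', ContinuousLinearMap.coe_fst', Function.comp_apply,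
      Pi.inv_apply, ContinuousLinearMap.prod_apply, add_apply, smul_apply, smul_eq_mul, smul_add,
      ContinuousLinearMap.id_apply, ContinuousLinearMap.smulRight_apply, sub_apply,
      Prod.smul_mk, mul_one, Prod.snd_add, Prod.smul_snd, Prod.fst_add, Prod.smul_fst]
    field_simp
    ring
  · simp [scaledJacobian, weightedChart, hz₀]

/-- The function whose weighted substitution is the derivative of that of `k`. -/
noncomputable def substDeriv (i : ℕ) (s : ℝ) (k : ℝ × ℝ × F → G) (z : ℝ × ℝ × F) :
    ℝ × ℝ × F →L[ℝ] G :=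
  (-(s * z.1 ^ i)) • (ContinuousLinearMap.fst ℝ ℝ (ℝ × F)).smulRight (k z) +
    (fderiv ℝ k z).comp (scaledJacobian i z)

lemma IsFlatTest.substDeriv {S : Set (ℝ × ℝ × F)} {k : ℝ × ℝ × F → G} (hk : IsFlatTest S k)
    (i : ℕ) (s : ℝ) : IsFlatTest S (substDeriv i s k) :=
  ((hk.clm (ContinuousLinearMap.smulRightL ℝ (ℝ × ℝ × F) G (.fst ℝ ℝ (ℝ × F)))).smul
    (by fun_prop)).add (hk.fderiv.clm_apply (T := fun z =>
      (ContinuousLinearMap.compL ℝ (ℝ × ℝ × F) (ℝ × ℝ × F) G).flip (scaledJacobian i z)) (by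
        unfold scaledJacobian
        fun_prop))

lemma hasFDerivAt_weightedSubst_of_pos (i : ℕ) (s : ℝ) {k : ℝ × ℝ × F → G}
    (hk : ContDiff ℝ ∞ k) {z : ℝ × ℝ × F} (hz : 0 < z.1) :
    HasFDerivAt (weightedSubst i s k) (weightedSubst i (s + 1 + i) (substDeriv i s k) z) z := by
  have hpos : weightedSubst i s k =ᶠ[𝓝 z] fun y => y.1 ^ (-s) • k (weightedChart i y) := by
    filter_upwards [continuous_fst.continuousAt.eventually_const_lt hz] with y hy
    exact weightedSubst_of_pos i s k hy
  have hpow : HasFDerivAt (fun y : ℝ × ℝ × F => y.1 ^ (-s)) _ z :=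
    (Real.hasDerivAt_rpow_const (.inl hz.ne')).comp_hasFDerivAt z
      (ContinuousLinearMap.fst ℝ ℝ (ℝ × F)).hasFDerivAt
  have hcomp := (hk.differentiable (by simp) (weightedChart i z)).hasFDerivAt.comp z
    (hasFDerivAt_weightedChart i hz)
  refine ((hpow.smul hcomp).congr_of_eventuallyEq hpos).congr_fderiv ?_
  have hweight : z.1 ^ (-(s + 1 + i)) = z.1 ^ (-s) * (z.1 ^ (i + 1))⁻¹ := by
    rw [← Real.rpow_natCast, ← Real.rpow_neg hz.le, ← Real.rpow_add hz]
    push_cast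
    ring_nf
  have hfst : (weightedChart i z).1 = z.1 := rfl
  have hpred : z.1 ^ (-s - 1) = z.1 ^ (-s) * z.1⁻¹ := by
    rw [sub_eq_add_neg, Real.rpow_add hz, Real.rpow_neg_one]
  rw [weightedSubst_of_pos _ _ _ hz, hweight, hpred, substDeriv, hfst]
  refine ContinuousLinearMap.ext fun v => ?_
  simp only [ContinuousLinearMap.comp_smulₛₗ, map_inv₀, Real.ringHom_apply, neg_mul, neg_smul,
    Function.comp_apply, add_apply, smul_apply, ContinuousLinearMap.comp_apply,
    ContinuousLinearMap.smulRight_apply, neg_apply, ContinuousLinearMap.coe_fst', smul_eq_mul,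
    smul_add, smul_neg]
  match_scalars <;> field_simp
  ring

lemma weightedSubst_isLittleO (i : ℕ) (s : ℝ) {k : ℝ × ℝ × F → G}
    (hk : IsFlatTest {z | z.1 = 0} k) {z : ℝ × ℝ × F} (hz : z.1 = 0) :
    weightedSubst i s k =o[𝓝 z] fun y => y - z := by
  obtain ⟨n, hn⟩ := exists_nat_ge (2 + s)
  obtain ⟨C, hC₀, hC⟩ := exists_norm_le_mul_pow_fst n hk
  have hbound : ∀ y : ℝ × ℝ × F, |y.1| < 1 → ‖weightedSubst i s k y‖ ≤ C * ‖y - z‖ ^ 2 := by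
    intro y hy
    rcases lt_or_ge 0 y.1 with hpos | hneg
    · have hyz : y.1 ≤ ‖y - z‖ := by
        simpa [hz] using (le_abs_self _).trans (norm_fst_le (y - z))
      rw [abs_of_pos hpos] at hy
      calc ‖weightedSubst i s k y‖
          = y.1 ^ (-s) * ‖k (weightedChart i y)‖ := by
            rw [weightedSubst_of_pos i s k hpos, norm_smul,
              Real.norm_of_nonneg (Real.rpow_nonneg hpos.le _)]
        _ ≤ y.1 ^ (-s) * (C * y.1 ^ n) := by
            have := hC (weightedChart i y)
            rw [weightedChart, abs_of_pos hpos] at this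
            gcongr
            exact this
        _ = C * y.1 ^ (n - s) := by
            rw [sub_eq_neg_add, Real.rpow_add hpos, Real.rpow_natCast]; ring
        _ ≤ C * y.1 ^ (2 : ℝ) := by
            gcongr C * ?_
            exact Real.rpow_le_rpow_of_exponent_ge hpos hy.le (by linarith)
        _ ≤ C * ‖y - z‖ ^ 2 := by
            rw [Real.rpow_two]; gcongr
    · rw [weightedSubst_of_nonpos i s k hneg, norm_zero]
      positivity
  have hbig : weightedSubst i s k =O[𝓝 z] fun y => ‖y - z‖ ^ 2 := by
    refine .of_bound C ?_
    have hcont : ContinuousAt (fun y : ℝ × ℝ × F => |y.1|) z := by fun_prop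
    filter_upwards [hcont.eventually_lt_const (by simp [hz] : |z.1| < 1)] with y hy
    simpa using hbound y hy
  exact hbig.trans_isLittleO <| (Asymptotics.isLittleO_norm_pow_id one_lt_two).comp_tendsto
    (tendsto_sub_nhds_zero_iff.2 tendsto_id)

lemma hasFDerivAt_weightedSubst (i : ℕ) (s : ℝ) {k : ℝ × ℝ × F → G}
    (hk : IsFlatTest {z | z.1 = 0} k) (z : ℝ × ℝ × F) :
    HasFDerivAt (weightedSubst i s k) (weightedSubst i (s + 1 + i) (substDeriv i s k) z) z := by
  rcases lt_trichotomy z.1 0 with hz | hz | hz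
  · rw [weightedSubst_of_nonpos _ _ _ hz.le]
    refine (hasFDerivAt_const (0 : G) z).congr_of_eventuallyEq ?_
    filter_upwards [continuous_fst.continuousAt.eventually_lt_const hz] with y hy
    exact weightedSubst_of_nonpos i s k hy.le
  · rw [weightedSubst_of_nonpos _ _ _ hz.le]
    refine .of_isLittleO ?_
    simpa [weightedSubst_of_nonpos i s k hz.le] using weightedSubst_isLittleO i s hk hz
  · exact hasFDerivAt_weightedSubst_of_pos i s hk.contDiff hz

lemma contDiff_weightedSubst_nat (i n : ℕ) (s : ℝ) {k : ℝ × ℝ × F → G}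
    (hk : IsFlatTest {z | z.1 = 0} k) : ContDiff ℝ n (weightedSubst i s k) := by
  induction n generalizing G s with
  | zero =>
    rw [Nat.cast_zero, contDiff_zero, continuous_iff_continuousAt]
    exact fun z => (hasFDerivAt_weightedSubst i s hk z).continuousAt
  | succ n ih =>
    push_cast
    rw [contDiff_succ_iff_hasFDerivAt]
    exact ⟨_, ih _ (hk.substDeriv i s), hasFDerivAt_weightedSubst i s hk⟩

theorem IsFlatTest.weightedSubst (i : ℕ) (s : ℝ) {k : ℝ × ℝ × F → G}
    (hk : IsFlatTest {z | z.1 = 0} k) : IsFlatTest {z | z.1 = 0} (weightedSubst i s k) :=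
  isFlatTest_of_fst_neg (contDiff_infty.2 fun n => contDiff_weightedSubst_nat i n s hk)
    (hasCompactSupport_weightedSubst i s hk.hasCompactSupport)
    fun _ hz => weightedSubst_of_nonpos i s k hz.le

lemma fderiv_weightedSubst_of_nonpos (i : ℕ) (s : ℝ) {k : ℝ × ℝ × F → G}
    (hk : IsFlatTest {z | z.1 = 0} k) {z : ℝ × ℝ × F} (hz : z.1 ≤ 0) :
    fderiv ℝ (weightedSubst i s k) z = 0 := by
  rw [(hasFDerivAt_weightedSubst i s hk z).fderiv, weightedSubst_of_nonpos _ _ _ hz]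

end WeightedSubstSmooth

/-! ### The cohomological equation in a cone -/

section Blowup

open Set Filter Topology

variable {F G : Type*}

/-- The map `(x, y, w) ↦ (x, xy, w)`. It collapses `x = 0` onto `x = u = 0` and carries the cone
`|y| < 2x` onto the parabolic region `|u| < 2x²`. -/
def blowDown (z : ℝ × ℝ × F) : ℝ × ℝ × F :=
  (z.1, z.1 * z.2.1, z.2.2)

/-- The linear vector field `(x, -y, 0)`. -/
def saddle [Zero F] (z : ℝ × ℝ × F) : ℝ × ℝ × F :=
  (z.1, -z.2.1, 0)

/-- The complement of the parabolic region `|u| < 2x²`, `0 < x`. -/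
def deadZone (F : Type*) : Set (ℝ × ℝ × F) :=
  {z | z.1 ≤ 0 ∨ 2 * z.1 ^ 2 ≤ |z.2.1|}

lemma blowDown_zero [Zero F] : blowDown (0 : ℝ × ℝ × F) = 0 := by
  simp [blowDown]

section Lift

variable [NormedAddCommGroup G] [NormedSpace ℝ G]

/-- The function `(x, v, w) ↦ φ(v) k(x, vx, w)`, cut off in the slope `v = y / x`. -/
def slopeLift (φ : ℝ → ℝ) (k : ℝ × ℝ × F → G) (z : ℝ × ℝ × F) : G :=
  φ z.2.1 • k (z.1, z.2.1 * z.1, z.2.2)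

/-- The function which on `x > 0` satisfies `coneLift φ s k (x, xy, w) = x⁻ˢ φ(y / x) k(x, y, w)`,
extended by `0`. -/
noncomputable def coneLift (φ : ℝ → ℝ) (s : ℝ) (k : ℝ × ℝ × F → G) : ℝ × ℝ × F → G :=
  weightedSubst 2 s (slopeLift φ k)

lemma coneLift_blowDown (φ : ℝ → ℝ) (s : ℝ) (k : ℝ × ℝ × F → G) {z : ℝ × ℝ × F} (hz : 0 < z.1) :
    coneLift φ s k (blowDown z) = z.1 ^ (-s) • φ (z.2.1 / z.1) • k z := by
  have hslope : z.1 * z.2.1 / z.1 ^ 2 = z.2.1 / z.1 := by field_simp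
  rw [coneLift, weightedSubst_of_pos 2 s _ (z := blowDown z) hz]
  simp only [slopeLift, weightedChart, blowDown, hslope, div_mul_cancel₀ _ hz.ne', Prod.mk.eta]

lemma coneLift_of_mem_deadZone {φ : ℝ → ℝ} (hφ : ∀ v, 2 ≤ |v| → φ v = 0) (s : ℝ)
    (k : ℝ × ℝ × F → G) {z : ℝ × ℝ × F} (hz : z ∈ deadZone F) : coneLift φ s k z = 0 := by
  rcases le_or_gt z.1 0 with hneg | hpos
  · exact weightedSubst_of_nonpos _ _ _ hneg
  · have hfar : 2 ≤ |z.2.1 / z.1 ^ 2| := by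
      rw [abs_div, abs_of_pos (by positivity : 0 < z.1 ^ 2), le_div_iff₀ (by positivity)]
      exact hz.resolve_left hpos.not_ge
    rw [coneLift, weightedSubst_of_pos _ _ _ hpos, slopeLift, weightedChart, hφ _ hfar, zero_smul,
      smul_zero]

end Lift

lemma contDiff_blowDown [NormedAddCommGroup F] [NormedSpace ℝ F] :
    ContDiff ℝ ∞ (blowDown : ℝ × ℝ × F → ℝ × ℝ × F) := by
  unfold blowDown
  fun_prop

lemma fderiv_blowDown_apply [NormedAddCommGroup F] [NormedSpace ℝ F] (z v : ℝ × ℝ × F) :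
    fderiv ℝ blowDown z v = (v.1, z.1 * v.2.1 + z.2.1 * v.1, v.2.2) := by
  have hx := (ContinuousLinearMap.fst ℝ ℝ (ℝ × F)).hasFDerivAt (x := z)
  have hy := ((ContinuousLinearMap.fst ℝ ℝ F).comp (.snd ℝ ℝ (ℝ × F))).hasFDerivAt (x := z)
  have hw := ((ContinuousLinearMap.snd ℝ ℝ F).comp (.snd ℝ ℝ (ℝ × F))).hasFDerivAt (x := z)
  have h : HasFDerivAt blowDown _ z := hx.prodMk ((hx.mul hy).prodMk hw)
  rw [h.fderiv]
  rfl

end Blowup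

section FlatLift

open Set

variable {F G : Type u} [NormedAddCommGroup F] [NormedSpace ℝ F] [NormedAddCommGroup G]
  [NormedSpace ℝ G] {φ : ℝ → ℝ} {k : ℝ × ℝ × F → G}

lemma IsFlatTest.slopeLift (hφ : ContDiff ℝ ∞ φ) (hφc : HasCompactSupport φ)
    (hk : IsFlatTest {z | z.1 = 0 ∧ z.2.1 = 0} k) : IsFlatTest {z | z.1 = 0} (slopeLift φ k) where
  contDiff := (hφ.comp (by fun_prop)).smul (hk.contDiff.comp (by fun_prop))
  hasCompactSupport := by
    have hK := hk.hasCompactSupport.isCompact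
    refine .intro ((hK.image continuous_fst).prod
      (hφc.isCompact.prod (hK.image (continuous_snd.comp continuous_snd)))) fun z hz => ?_
    by_cases hv : z.2.1 ∈ tsupport φ
    · have hout : (z.1, z.2.1 * z.1, z.2.2) ∉ tsupport k := fun h =>
        hz ⟨⟨_, h, rfl⟩, hv, ⟨_, h, rfl⟩⟩
      rw [NambuLin.slopeLift, image_eq_zero_of_notMem_tsupport hout, smul_zero]
    · rw [NambuLin.slopeLift, image_eq_zero_of_notMem_tsupport hv, zero_smul]
  flatAt z hz := by
    have hmem : (z.1, z.2.1 * z.1, z.2.2) ∈ {z : ℝ × ℝ × F | z.1 = 0 ∧ z.2.1 = 0} :=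
      ⟨hz, mul_eq_zero_of_right _ hz⟩
    have hcomp := (hk.flatAt _ hmem).comp hk.contDiff.contDiffAt
      (f := fun z : ℝ × ℝ × F => (z.1, z.2.1 * z.1, z.2.2)) (z := z) (by fun_prop)
    exact hcomp.clm_apply (T := fun z => φ z.2.1 • ContinuousLinearMap.id ℝ G) (by fun_prop)
      (hk.contDiff.comp (by fun_prop))

lemma IsFlatTest.coneLift (hφ : ContDiff ℝ ∞ φ) (hφc : HasCompactSupport φ)
    (hk : IsFlatTest {z | z.1 = 0 ∧ z.2.1 = 0} k) (s : ℝ) :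
    IsFlatTest {z | z.1 = 0} (coneLift φ s k) :=
  (hk.slopeLift hφ hφc).weightedSubst 2 s

end FlatLift

section FlatTransport

open Set Filter Topology

variable {F : Type u} [NormedAddCommGroup F] [NormedSpace ℝ F] {B : ℝ × ℝ × F → ℝ × F}

lemma exists_contDiff_eventuallyEq_inv_one_add :
    ∃ κ : ℝ → ℝ, ContDiff ℝ ∞ κ ∧ ∀ᶠ a in 𝓝 0, κ a * (1 + a) = 1 := by
  obtain ⟨c, hc, -, hc₁, -, hcU⟩ :=
    exists_contDiff_smul_self_mem (Metric.ball_mem_nhds (0 : ℝ) one_pos)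
  have hpos : ∀ a, 0 < 1 + c a * a := fun a => by
    have h := hcU a
    rw [mem_ball_zero_iff, Real.norm_eq_abs, smul_eq_mul] at h
    linarith [neg_lt_of_abs_lt h]
  refine ⟨fun a => (1 + c a * a)⁻¹, .inv (by fun_prop) fun a => (hpos a).ne', ?_⟩
  filter_upwards [hc₁] with a ha
  have h := (hpos a).ne'
  rw [ha, Pi.one_apply, one_mul] at h ⊢
  exact inv_mul_cancel₀ h

lemma two_mul_sq_le_abs_of_hasDerivAt {v v' : ℝ → ℝ} {t : ℝ}
    (hv : ∀ s ∈ Icc 0 t, HasDerivAt v (v' s) s) (hv' : ∀ s ∈ Icc 0 t, |v' s| ≤ s)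
    (hvt : 2 * t ^ 2 ≤ |v t|) {s : ℝ} (hs : s ∈ Icc 0 t) : 2 * s ^ 2 ≤ |v s| := by
  have hsub : |v t - v s| ≤ t * (t - s) := by
    have h := (convex_Icc s t).norm_image_sub_le_of_norm_hasDerivWithin_le
      (fun r hr => (hv r ⟨hs.1.trans hr.1, hr.2⟩).hasDerivWithinAt)
      (fun r hr => (hv' r ⟨hs.1.trans hr.1, hr.2⟩).trans hr.2)
      (left_mem_Icc.2 hs.2) (right_mem_Icc.2 hs.2)
    rwa [Real.norm_eq_abs, Real.norm_of_nonneg (sub_nonneg.2 hs.2)] at h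
  have htri := abs_sub_abs_le_abs_sub (v t) (v s)
  nlinarith [hs.1, hs.2]

lemma mem_deadZone_of_characteristic {γ : ℝ → ℝ × F} {t : ℝ}
    (hB : ∀ z : ℝ × ℝ × F, |z.1| ≤ |t| → |(B z).1| ≤ |z.1|)
    (hγ : ∀ s ∈ uIcc 0 t, HasDerivAt γ (B (s, γ s)) s) (ht : (t, γ t) ∈ deadZone F) {s : ℝ}
    (hs : s ∈ uIcc 0 t) : (s, γ s) ∈ deadZone F := by
  rcases le_or_gt t 0 with hneg | hpos
  · exact .inl (uIcc_of_ge hneg ▸ hs).2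
  · rw [uIcc_of_le hpos.le] at hγ hs
    refine .inr (two_mul_sq_le_abs_of_hasDerivAt (fun r hr => (hγ r hr).fst) (fun r hr => ?_)
      (ht.resolve_left hpos.not_ge) hs)
    have h := hB (r, γ r) (abs_le_abs_of_nonneg hr.1 hr.2)
    rwa [abs_of_nonneg hr.1] at h

-- Truncating in `y` makes the characteristic system globally Lipschitz.
lemma exists_affine_cutoff {E : Type*} [NormedAddCommGroup E] [NormedSpace ℝ E] {c g : E → ℝ}
    (hc : ContDiff ℝ ∞ c) (hcc : HasCompactSupport c) (hg : ContDiff ℝ ∞ g)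
    (hgc : HasCompactSupport g) :
    ∃ R : E × ℝ → ℝ, ContDiff ℝ ∞ R ∧ HasCompactSupport R ∧
      (∀ z y, |y| < 1 → R (z, y) = c z * y + g z) ∧ ∀ z, R (z, 0) = g z := by
  let θ : ContDiffBump (0 : ℝ) := ⟨1, 2, one_pos, one_lt_two⟩
  have hθ : ContDiff ℝ ∞ (θ : ℝ → ℝ) := θ.contDiff
  have hθ₁ : ∀ y, |y| < 1 → θ y = 1 := fun y hy =>
    θ.one_of_mem_closedBall (mem_closedBall_zero_iff.2 hy.le)
  refine ⟨fun x => θ x.2 * (c x.1 * x.2 + g x.1), by fun_prop, ?_, fun z y hy => ?_, fun z => ?_⟩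
  · refine .intro ((hcc.isCompact.union hgc.isCompact).prod θ.hasCompactSupport.isCompact)
      fun x hx => ?_
    by_cases hy : x.2 ∈ tsupport θ
    · have hz : x.1 ∉ tsupport c ∪ tsupport g := fun hz => hx ⟨hz, hy⟩
      rw [mem_union, not_or] at hz
      simp [image_eq_zero_of_notMem_tsupport hz.1, image_eq_zero_of_notMem_tsupport hz.2]
    · rw [image_eq_zero_of_notMem_tsupport hy, zero_mul]
  · simp [hθ₁ y hy]
  · simp [hθ₁ 0 (by simp)]

theorem exists_flat_transport [FiniteDimensional ℝ F] (hB : IsFlatTest {z | z.1 = 0} B)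
    {c g : ℝ × ℝ × F → ℝ} (hc : ContDiff ℝ ∞ c) (hcc : HasCompactSupport c)
    (hg : ContDiff ℝ ∞ g) (hgc : HasCompactSupport g) (hg₀ : ∀ z ∈ deadZone F, g z = 0) :
    ∃ U : Set (ℝ × ℝ × F), IsOpen U ∧ 0 ∈ U ∧ ∃ h : ℝ × ℝ × F → ℝ, ContDiffOn ℝ ∞ h U ∧
      (∀ z ∈ U, fderiv ℝ h z (1, B z) = c z * h z + g z) ∧ ∀ z ∈ U ∩ deadZone F, h z = 0 := by
  have : CompleteSpace F := FiniteDimensional.complete ℝ F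
  obtain ⟨R, hR, hRc, hR₁, hR₀⟩ := exists_affine_cutoff hc hcc hg hgc
  obtain ⟨K, hBK⟩ := hB.contDiff.lipschitzWith_of_hasCompactSupport hB.hasCompactSupport (by simp)
  obtain ⟨K', hRK⟩ := hR.lipschitzWith_of_hasCompactSupport hRc (by simp)
  obtain ⟨ε, hε, h, hh, hh₀, hpde, hchar⟩ := exists_transport hB.contDiff hR hBK hRK
  obtain ⟨C, hC₀, hC⟩ := exists_norm_le_mul_pow_fst 2 hB
  have hslow : ∀ z : ℝ × ℝ × F, |z.1| < (C + 1)⁻¹ → |(B z).1| ≤ |z.1| := fun z hz => by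
    have h₁ : |z.1| * (C + 1) < 1 := by rwa [← lt_div_iff₀ (by positivity), one_div]
    have h₂ : |(B z).1| ≤ C * |z.1| ^ 2 := (norm_fst_le _).trans (hC z)
    nlinarith [abs_nonneg z.1]
  have hopen : IsOpen {z : ℝ × ℝ × F | |z.1| < ε} := isOpen_abs_fst_lt ε
  refine ⟨{z | |z.1| < (C + 1)⁻¹} ∩ ({z | |z.1| < ε} ∩ h ⁻¹' Metric.ball 0 1),
    (isOpen_abs_fst_lt _).inter (hh.continuousOn.isOpen_inter_preimage hopen Metric.isOpen_ball),
    ⟨?_, ?_, ?_⟩, h, hh.mono fun z hz => hz.2.1, fun z hz => ?_, fun z hz => ?_⟩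
  · simpa using by positivity
  · simpa using hε
  · rw [mem_preimage, show h 0 = 0 from hh₀ 0]
    exact Metric.mem_ball_self one_pos
  · rw [hpde z hz.2.1, hR₁ _ _ (by simpa using hz.2.2)]
  · obtain ⟨γ, hγt, hγ⟩ := hchar z.1 z.2 hz.1.2.1
    have hle : ∀ s ∈ uIcc 0 z.1, |s| ≤ |z.1| := fun s hs => by
      simpa using abs_sub_left_of_mem_uIcc hs
    have hε' : ∀ s ∈ uIcc 0 z.1, |s| < ε := fun s hs => (hle s hs).trans_lt hz.1.2.1
    have hdead : ∀ s ∈ uIcc 0 z.1, (s, γ s) ∈ deadZone F := fun s hs =>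
      mem_deadZone_of_characteristic (fun y hy => hslow y (hy.trans_lt hz.1.1)) hγ
        (hγt.symm ▸ hz.2) hs
    have h₀ := transport_eq_zero_of_characteristic hRK
      (fun s hs => (hh.contDiffAt (hopen.mem_nhds (hε' s hs))).differentiableAt (by simp))
      (fun s hs => hpde _ (hε' s hs)) hγ (hh₀ _) fun s hs => (hR₀ _).trans (hg₀ _ (hdead s hs))
    rwa [hγt] at h₀

end FlatTransport

/-- Solvability near `0` of the cohomological equation `X f - μ f = g` by a smooth `f` vanishing to
second order at `0`. -/
def SolvableNear {E : Type*} [NormedAddCommGroup E] [NormedSpace ℝ E] (X : E → E) (μ : ℝ)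
    (g : E → ℝ) : Prop :=
  ∃ f : E → ℝ, ContDiff ℝ ∞ f ∧ f 0 = 0 ∧ fderiv ℝ f 0 = 0 ∧
    ∀ᶠ z in nhds 0, fderiv ℝ f z (X z) - μ * f z = g z

section Cone

open Set Filter Topology

/-- The function `χ(y / x)`, extended by `0` to `x ≤ 0`. -/
noncomputable def coneCutoff {F : Type*} (χ : ℝ → ℝ) (z : ℝ × ℝ × F) : ℝ :=
  if 0 < z.1 then χ (z.2.1 / z.1) else 0

lemma eventually_blowDown_mem_deadZone {F : Type*} [TopologicalSpace F] {z : ℝ × ℝ × F}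
    (hz : 0 < z.1) (hsteep : 2 * z.1 < |z.2.1|) : ∀ᶠ y in 𝓝 z, blowDown y ∈ deadZone F := by
  have hopen : IsOpen {y : ℝ × ℝ × F | 2 * y.1 < |y.2.1|} :=
    isOpen_lt (by fun_prop) (by fun_prop)
  filter_upwards [continuous_fst.continuousAt.eventually_const_lt hz, hopen.mem_nhds hsteep]
    with y hy₀ hy
  refine .inr ?_
  simp only [blowDown, abs_mul, abs_of_pos hy₀]
  nlinarith [hy.le]

variable {F : Type} [NormedAddCommGroup F] [NormedSpace ℝ F]

lemma fderiv_rpow_mul_comp_blowDown (μ : ℝ) {h : ℝ × ℝ × F → ℝ} {z : ℝ × ℝ × F} (hz : 0 < z.1)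
    (hh : DifferentiableAt ℝ h (blowDown z)) (v : ℝ × ℝ × F) :
    fderiv ℝ (fun y => y.1 ^ μ * h (blowDown y)) z v =
      μ * z.1 ^ (μ - 1) * v.1 * h (blowDown z) +
        z.1 ^ μ * fderiv ℝ h (blowDown z) (fderiv ℝ blowDown z v) := by
  have hpow := (Real.hasDerivAt_rpow_const (p := μ) (.inl hz.ne')).comp_hasFDerivAt z
    (ContinuousLinearMap.fst ℝ ℝ (ℝ × F)).hasFDerivAt
  have hcomp := hh.hasFDerivAt.comp z (contDiff_blowDown.differentiable (by simp) z).hasFDerivAt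
  refine (DFunLike.congr_fun (hpow.mul hcomp).fderiv v).trans ?_
  simp only [add_apply, smul_apply, ContinuousLinearMap.comp_apply, Function.comp_apply,
    ContinuousLinearMap.coe_fst', smul_eq_mul]
  ring

theorem exists_timeChange {Y : ℝ × ℝ × F → ℝ × ℝ × F}
    (hY : IsFlatTest {z | z.1 = 0 ∧ z.2.1 = 0} Y) :
    ∃ (τ q : ℝ × ℝ × F → ℝ) (B : ℝ × ℝ × F → ℝ × F), ContDiff ℝ ∞ τ ∧ ContDiff ℝ ∞ q ∧
      HasCompactSupport q ∧ IsFlatTest {z | z.1 = 0} B ∧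
      ∀ᶠ z in 𝓝 0, 0 < z.1 → |z.2.1| ≤ 2 * z.1 →
        τ (blowDown z) • fderiv ℝ blowDown z (saddle z + Y z) = z.1 • (1, B (blowDown z)) ∧
          τ (blowDown z) = 1 + z.1 * q (blowDown z) := by
  let θ : ContDiffBump (0 : ℝ) := ⟨2, 3, two_pos, by norm_num⟩
  have hθ : ContDiff ℝ ∞ (θ : ℝ → ℝ) := θ.contDiff
  obtain ⟨κ, hκ, hκ₁⟩ := exists_contDiff_eventuallyEq_inv_one_add
  let N := coneLift θ 1 fun z => fderiv ℝ blowDown z (Y z)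
  have hN : IsFlatTest {z | z.1 = 0} N :=
    (hY.clm_apply (contDiff_blowDown.fderiv_right (by simp))).coneLift hθ θ.hasCompactSupport 1
  have hY₁ := (hY.clm (.fst ℝ ℝ (ℝ × F))).coneLift hθ θ.hasCompactSupport 2
  have hτ : ContDiff ℝ ∞ fun z => κ (N z).1 := hκ.comp (contDiff_fst.comp hN.contDiff)
  have hq := hY₁.smul hτ.neg
  refine ⟨_, _, _, hτ, hq.contDiff, hq.hasCompactSupport,
    (hN.clm (.snd ℝ ℝ (ℝ × F))).smul hτ, ?_⟩
  have hlim : Tendsto (fun z => (N (blowDown z)).1) (𝓝 0) (𝓝 0) := by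
    have h : Continuous fun z => (N (blowDown z)).1 :=
      continuous_fst.comp (hN.contDiff.continuous.comp contDiff_blowDown.continuous)
    simpa [blowDown_zero, (hN.flatAt 0 rfl).apply_eq_zero] using h.tendsto 0
  filter_upwards [hlim.eventually hκ₁] with z hz hpos hcone
  have hθz : θ (z.2.1 / z.1) = 1 := θ.one_of_mem_closedBall <| by
    rwa [mem_closedBall_zero_iff, Real.norm_eq_abs, abs_div, abs_of_pos hpos, div_le_iff₀ hpos]
  have hNz : fderiv ℝ blowDown z (Y z) = z.1 • N (blowDown z) := by
    simp only [N]
    rw [coneLift_blowDown θ 1 _ hpos, hθz, one_smul, smul_smul, Real.rpow_neg_one,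
      mul_inv_cancel₀ hpos.ne', one_smul]
  have hsaddle : fderiv ℝ blowDown z (saddle z) = z.1 • (1, 0) := by
    simp [fderiv_blowDown_apply, saddle, mul_comm]
  refine ⟨?_, ?_⟩
  · rw [map_add, hsaddle, hNz, ← smul_add, smul_comm]
    refine congrArg (z.1 • ·) (Prod.ext hz ?_)
    simp only [Prod.smul_snd, Prod.snd_add, zero_add, ContinuousLinearMap.coe_snd']
  · have hY₁z : (Y z).1 = z.1 * (N (blowDown z)).1 := by
      simpa [fderiv_blowDown_apply] using congrArg Prod.fst hNz
    have hpow : z.1 ^ (-2 : ℝ) = (z.1 ^ 2)⁻¹ := by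
      rw [Real.rpow_neg hpos.le, Real.rpow_two]
    simp only [coneLift_blowDown θ 2 _ hpos, hθz, hpow, ContinuousLinearMap.coe_fst', hY₁z,
      smul_eq_mul]
    field_simp
    linear_combination hz

lemma exists_weighted_pullback [FiniteDimensional ℝ F] {U : Set (ℝ × ℝ × F)} (hU : IsOpen U)
    (h₀U : 0 ∈ U) {h : ℝ × ℝ × F → ℝ} (hh : ContDiffOn ℝ ∞ h U)
    (hh₀ : ∀ z ∈ U ∩ deadZone F, h z = 0) (μ : ℝ) :
    ∃ f : ℝ × ℝ × F → ℝ, ContDiff ℝ ∞ f ∧ (∀ z, z.1 ≤ 0 → f z = 0 ∧ fderiv ℝ f z = 0) ∧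
      ∀ᶠ z in 𝓝 0, 0 < z.1 → f z = z.1 ^ μ * h (blowDown z) := by
  have hUbd : blowDown ⁻¹' U ∈ 𝓝 (0 : ℝ × ℝ × F) :=
    contDiff_blowDown.continuous.continuousAt.preimage_mem_nhds
      (by rw [blowDown_zero]; exact hU.mem_nhds h₀U)
  obtain ⟨c, hc, hcc, hc₁, hc₀, hcU⟩ := exists_contDiff_smul_self_mem hUbd
  have hk : ContDiff ℝ ∞ fun z : ℝ × ℝ × F => h (blowDown (c z • z)) :=
    hh.comp_contDiff (contDiff_blowDown.comp (hc.smul contDiff_id)) hcU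
  have hkc : HasCompactSupport fun z : ℝ × ℝ × F => h (blowDown (c z • z)) :=
    hasCompactSupport_comp_smul_self (k := fun z => h (blowDown z)) hcc <| by
      rw [blowDown_zero]
      exact hh₀ 0 ⟨h₀U, .inl le_rfl⟩
  have hflat := isFlatTest_of_fst_neg hk hkc fun z hz =>
    hh₀ (blowDown (c z • z)) ⟨hcU z, .inl (mul_nonpos_of_nonneg_of_nonpos (hc₀ z) hz.le)⟩
  refine ⟨weightedSubst 0 (-μ) _, (hflat.weightedSubst 0 (-μ)).contDiff, fun z hz =>
    ⟨weightedSubst_of_nonpos _ _ _ hz, fderiv_weightedSubst_of_nonpos _ _ hflat hz⟩, ?_⟩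
  filter_upwards [hc₁] with z hz hpos
  simp [weightedSubst_of_pos _ _ _ hpos, weightedChart, hz]

lemma fderiv_apply_sub_mul_eq_of_timeChange {f h : ℝ × ℝ × F → ℝ} {z v : ℝ × ℝ × F} {μ t q r : ℝ}
    {b : ℝ × F} (hz : 0 < z.1) (hf : f =ᶠ[𝓝 z] fun y => y.1 ^ μ * h (blowDown y))
    (hh : DifferentiableAt ℝ h (blowDown z)) (hv : t • fderiv ℝ blowDown z v = z.1 • (1, b))
    (ht : t = 1 + z.1 * q)
    (hpde : fderiv ℝ h (blowDown z) (1, b) = μ * q * h (blowDown z) + t * (z.1 ^ (-(1 + μ)) * r)) :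
    fderiv ℝ f z v - μ * f z = r := by
  have hv₁ : t * v.1 = z.1 := by
    simpa [fderiv_blowDown_apply] using congrArg Prod.fst hv
  have ht₀ : t ≠ 0 := left_ne_zero_of_mul (hv₁.trans_ne hz.ne')
  have hDh : t * fderiv ℝ h (blowDown z) (fderiv ℝ blowDown z v) =
      z.1 * fderiv ℝ h (blowDown z) (1, b) := by
    simpa only [map_smul, smul_eq_mul] using congrArg (fderiv ℝ h (blowDown z)) hv
  have hpow : z.1 ^ (μ - 1) * z.1 = z.1 ^ μ := by
    rw [Real.rpow_sub_one hz.ne', div_mul_cancel₀ _ hz.ne']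
  have hinv : z.1 ^ μ * z.1 * z.1 ^ (-(1 + μ)) = 1 := by
    rw [← Real.rpow_add_one hz.ne', ← Real.rpow_add hz]
    ring_nf
    exact Real.rpow_zero _
  rw [hf.fderiv_eq, hf.eq_of_nhds, fderiv_rpow_mul_comp_blowDown μ hz hh]
  refine mul_left_cancel₀ ht₀ ?_
  linear_combination μ * z.1 ^ (μ - 1) * h (blowDown z) * hv₁ + z.1 ^ μ * hDh +
    z.1 ^ μ * z.1 * hpde + μ * h (blowDown z) * hpow - μ * z.1 ^ μ * h (blowDown z) * ht +
    t * r * hinv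

theorem solvableNear_coneCutoff_mul [FiniteDimensional ℝ F] {Y : ℝ × ℝ × F → ℝ × ℝ × F}
    (hY : IsFlatTest {z | z.1 = 0 ∧ z.2.1 = 0} Y) {g : ℝ × ℝ × F → ℝ}
    (hg : IsFlatTest {z | z.1 = 0 ∧ z.2.1 = 0} g) {χ : ℝ → ℝ} (hχ : ContDiff ℝ ∞ χ)
    (hχ₀ : ∀ v, 2 ≤ |v| → χ v = 0) (μ : ℝ) :
    SolvableNear (fun z => saddle z + Y z) μ fun z => coneCutoff χ z * g z := by
  obtain ⟨τ, q, B, hτ, hq, hqc, hB, hτB⟩ := exists_timeChange hY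
  have hχc : HasCompactSupport χ := .intro (isCompact_closedBall (0 : ℝ) 2) fun v hv =>
    hχ₀ v (by simpa using (not_le.1 (by simpa using hv)).le)
  have hG := (hg.coneLift hχ hχc (1 + μ)).smul hτ
  obtain ⟨U, hU, h₀U, h, hh, hpde, hh₀⟩ := exists_flat_transport hB
    (contDiff_const.mul hq : ContDiff ℝ ∞ fun z => μ * q z) (hqc.mul_left) hG.contDiff
    hG.hasCompactSupport fun z hz => by rw [coneLift_of_mem_deadZone hχ₀ _ _ hz, smul_zero]
  obtain ⟨f, hf, hf₀, hfh⟩ := exists_weighted_pullback hU h₀U hh hh₀ μ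
  refine ⟨f, hf, (hf₀ 0 le_rfl).1, (hf₀ 0 le_rfl).2, ?_⟩
  have hbd : ∀ᶠ z in 𝓝 (0 : ℝ × ℝ × F), blowDown z ∈ U :=
    contDiff_blowDown.continuous.continuousAt.eventually
      (by rw [blowDown_zero]; exact hU.mem_nhds h₀U)
  filter_upwards [hτB, (hfh.and hbd).eventually_nhds] with z hz hev
  rcases le_or_gt z.1 0 with hneg | hpos
  · simp [(hf₀ z hneg).1, (hf₀ z hneg).2, coneCutoff, hneg.not_gt]
  have hpos' : ∀ᶠ y : ℝ × ℝ × F in 𝓝 z, 0 < y.1 :=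
    continuous_fst.continuousAt.eventually_const_lt hpos
  rcases lt_or_ge (2 * z.1) |z.2.1| with hout | hcone
  · have hf0 : f =ᶠ[𝓝 z] 0 := by
      filter_upwards [hev, hpos', eventually_blowDown_mem_deadZone hpos hout]
        with y ⟨hy, hyU⟩ hy₀ hydead
      rw [hy hy₀, hh₀ _ ⟨hyU, hydead⟩, mul_zero, Pi.zero_apply]
    have hfar : 2 ≤ |z.2.1 / z.1| := by
      rw [abs_div, abs_of_pos hpos, le_div_iff₀ hpos]
      exact hout.le
    simp [hf0.fderiv_eq, hf0.eq_of_nhds, coneCutoff, hpos, hχ₀ _ hfar]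
  · obtain ⟨hτz, hqz⟩ := hz hpos hcone
    have hbdU := hev.self_of_nhds.2
    have hf_eq : f =ᶠ[𝓝 z] fun y => y.1 ^ μ * h (blowDown y) := by
      filter_upwards [hev, hpos'] with y hy hy₀ using hy.1 hy₀
    refine fderiv_apply_sub_mul_eq_of_timeChange hpos hf_eq
      ((hh.contDiffAt (hU.mem_nhds hbdU)).differentiableAt (by simp)) hτz hqz ?_
    simp only [hpde _ hbdU, coneLift_blowDown χ _ _ hpos, coneCutoff, if_pos hpos, smul_eq_mul]

end Cone

section SolvableNear

open Filter Topology

variable {E E' : Type*} [NormedAddCommGroup E] [NormedSpace ℝ E] [NormedAddCommGroup E']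
  [NormedSpace ℝ E']

namespace SolvableNear

variable {X X' : E → E} {μ : ℝ} {g g' : E → ℝ}

lemma add (h : SolvableNear X μ g) (h' : SolvableNear X μ g') :
    SolvableNear X μ fun z => g z + g' z := by
  obtain ⟨f, hf, hf₀, hf₁, heq⟩ := h
  obtain ⟨f', hf', hf'₀, hf'₁, heq'⟩ := h'
  have hadd : ∀ z, fderiv ℝ (fun z => f z + f' z) z = fderiv ℝ f z + fderiv ℝ f' z := fun z =>
    fderiv_fun_add (hf.differentiable (by simp) z) (hf'.differentiable (by simp) z)
  refine ⟨_, hf.add hf', by simp [hf₀, hf'₀], by simp [hadd, hf₁, hf'₁], ?_⟩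
  filter_upwards [heq, heq'] with z hz hz'
  rw [hadd, add_apply]
  linear_combination hz + hz'

lemma congr (h : SolvableNear X μ g) (hX : X' =ᶠ[𝓝 0] X) (hg : g' =ᶠ[𝓝 0] g) :
    SolvableNear X' μ g' := by
  obtain ⟨f, hf, hf₀, hf₁, heq⟩ := h
  refine ⟨f, hf, hf₀, hf₁, ?_⟩
  filter_upwards [heq, hX, hg] with z hz hXz hgz
  rw [hXz, hgz, hz]

lemma comp_equiv {X' : E' → E'} {g : E' → ℝ} (h : SolvableNear X' μ g) (T : E ≃L[ℝ] E') {e : ℝ}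
    (hX : ∀ z, T (X z) = e • X' (T z)) : SolvableNear X (e * μ) fun z => e * g (T z) := by
  obtain ⟨f, hf, hf₀, hf₁, heq⟩ := h
  have hT : Tendsto T (𝓝 0) (𝓝 0) := map_zero T ▸ T.continuous.tendsto 0
  refine ⟨f ∘ T, hf.comp T.contDiff, by simp [hf₀], by simp [T.comp_right_fderiv, hf₁], ?_⟩
  filter_upwards [hT.eventually heq] with z hz
  rw [T.comp_right_fderiv, ContinuousLinearMap.comp_apply, ContinuousLinearEquiv.coe_coe, hX,
    map_smul, smul_eq_mul, Function.comp_apply]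
  linear_combination e * hz

end SolvableNear

end SolvableNear

/-! ### The cohomological equation for a saddle -/

section SlopeCutoff

/-- A smooth even cutoff in the slope with `χ(v) + χ(1 / v) = 1`, because the argument
`2 / (1 + v²) - 1 / 2` of the step function turns into its complement to `1` under `v ↦ 1 / v`. -/
noncomputable def slopeCutoff (v : ℝ) : ℝ :=
  Real.smoothTransition (2 / (1 + v ^ 2) - 1 / 2)

lemma contDiff_slopeCutoff : ContDiff ℝ ∞ slopeCutoff :=
  Real.smoothTransition.contDiff.comp <|
    (contDiff_const.div (by fun_prop) fun v => by positivity).sub contDiff_const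

lemma slopeCutoff_of_two_le_abs {v : ℝ} (hv : 2 ≤ |v|) : slopeCutoff v = 0 := by
  refine Real.smoothTransition.zero_of_nonpos ?_
  have h : 2 ^ 2 ≤ v ^ 2 := sq_le_sq.2 (by simpa using hv)
  rw [sub_nonpos, div_le_div_iff₀ (by positivity) two_pos]
  linarith

lemma slopeCutoff_zero : slopeCutoff 0 = 1 :=
  Real.smoothTransition.one_of_one_le (by norm_num)

lemma slopeCutoff_neg (v : ℝ) : slopeCutoff (-v) = slopeCutoff v := by
  simp [slopeCutoff]

lemma smoothTransition_add_one_sub (x : ℝ) :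
    Real.smoothTransition x + Real.smoothTransition (1 - x) = 1 := by
  have h := (Real.smoothTransition.pos_denom x).ne'
  rw [Real.smoothTransition, Real.smoothTransition, sub_sub_cancel,
    add_comm (expNegInvGlue (1 - x)), ← add_div, div_self h]

lemma slopeCutoff_div_add_swap {x y : ℝ} (hx : x ≠ 0) (hy : y ≠ 0) :
    slopeCutoff (y / x) + slopeCutoff (x / y) = 1 := by
  have h : 2 / (1 + (x / y) ^ 2) - 1 / 2 = 1 - (2 / (1 + (y / x) ^ 2) - 1 / 2) := by
    field_simp
    ring
  rw [slopeCutoff, slopeCutoff, h, smoothTransition_add_one_sub]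

end SlopeCutoff

section FourCones

variable (F : Type*) [NormedAddCommGroup F] [NormedSpace ℝ F]

/-- The reflection `(x, y, w) ↦ (-x, y, w)`. -/
def flipFst : (ℝ × ℝ × F) ≃L[ℝ] ℝ × ℝ × F :=
  (ContinuousLinearEquiv.neg ℝ).prodCongr (.refl ℝ (ℝ × F))

/-- The reflection `(x, y, w) ↦ (y, x, w)`. -/
def swapFstSnd : (ℝ × ℝ × F) ≃L[ℝ] ℝ × ℝ × F :=
  (ContinuousLinearEquiv.prodAssoc ℝ ℝ ℝ F).symm.trans <|
    ((ContinuousLinearEquiv.prodComm ℝ ℝ ℝ).prodCongr (.refl ℝ F)).trans <|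
      ContinuousLinearEquiv.prodAssoc ℝ ℝ ℝ F

variable {F}

lemma flipFst_saddle (z : ℝ × ℝ × F) : flipFst F (saddle z) = saddle (flipFst F z) := rfl

lemma swapFstSnd_saddle (z : ℝ × ℝ × F) :
    swapFstSnd F (saddle z) = -saddle (swapFstSnd F z) := by
  change ((-z.2.1, z.1, 0) : ℝ × ℝ × F) = -(z.2.1, -z.1, 0)
  simp

lemma coneCutoff_slopeCutoff_add {z : ℝ × ℝ × F} (hz : ¬(z.1 = 0 ∧ z.2.1 = 0)) :
    coneCutoff slopeCutoff z + coneCutoff slopeCutoff (flipFst F z) +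
        coneCutoff slopeCutoff (swapFstSnd F z) +
      coneCutoff slopeCutoff (flipFst F (swapFstSnd F z)) = 1 := by
  obtain ⟨x, y, w⟩ := z
  change coneCutoff slopeCutoff (x, y, w) + coneCutoff slopeCutoff (-x, y, w) +
    coneCutoff slopeCutoff (y, x, w) + coneCutoff slopeCutoff (-y, x, w) = 1
  simp only [coneCutoff, div_neg, slopeCutoff_neg, neg_pos]
  rcases eq_or_ne x 0 with rfl | hx <;> rcases eq_or_ne y 0 with rfl | hy
  · simp at hz
  · rcases lt_or_gt_of_ne hy with hy | hy <;> simp [hy, hy.not_gt, slopeCutoff_zero]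
  · rcases lt_or_gt_of_ne hx with hx | hx <;> simp [hx, hx.not_gt, slopeCutoff_zero]
  · have hsum := slopeCutoff_div_add_swap hx hy
    rcases lt_or_gt_of_ne hx with hx | hx <;> rcases lt_or_gt_of_ne hy with hy | hy <;>
      simpa [hx, hy, hx.not_gt, hy.not_gt] using hsum

end FourCones

section SaddleSolvable

lemma saddle_eq_zero_iff {F : Type*} [Zero F] {z : ℝ × ℝ × F} :
    saddle z = 0 ↔ z.1 = 0 ∧ z.2.1 = 0 := by
  simp [saddle, Prod.ext_iff]

variable {F : Type} [NormedAddCommGroup F] [NormedSpace ℝ F] [FiniteDimensional ℝ F]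
  {Y : ℝ × ℝ × F → ℝ × ℝ × F} {g : ℝ × ℝ × F → ℝ}

lemma solvableNear_coneCutoff_comp_mul (hY : IsFlatTest {z | z.1 = 0 ∧ z.2.1 = 0} Y)
    (hg : IsFlatTest {z | z.1 = 0 ∧ z.2.1 = 0} g) (μ : ℝ) (T : (ℝ × ℝ × F) ≃L[ℝ] ℝ × ℝ × F) {e : ℝ}
    (he : e * e = 1) (hT : ∀ z, T (saddle z) = e • saddle (T z)) :
    SolvableNear (fun z => saddle z + Y z) μ fun z => coneCutoff slopeCutoff (T z) * g z := by
  have he₀ : e ≠ 0 := left_ne_zero_of_mul_eq_one he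
  have hpre : T.symm ⁻¹' {z | z.1 = 0 ∧ z.2.1 = 0} = {z | z.1 = 0 ∧ z.2.1 = 0} := by
    ext z
    have h := hT (T.symm z)
    rw [T.apply_symm_apply] at h
    rw [Set.mem_preimage, Set.mem_ofPred_eq, Set.mem_ofPred_eq, ← saddle_eq_zero_iff,
      ← saddle_eq_zero_iff, ← T.map_eq_zero_iff, h, smul_eq_zero_iff_right he₀]
  have hY' := (hY.comp_equiv T.symm).clm (e • (T : (ℝ × ℝ × F) →L[ℝ] ℝ × ℝ × F))
  have hg' := (hg.comp_equiv T.symm).clm (e • ContinuousLinearMap.id ℝ ℝ)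
  rw [hpre] at hY' hg'
  have h := (solvableNear_coneCutoff_mul hY' hg' contDiff_slopeCutoff
    (fun _ => slopeCutoff_of_two_le_abs) (e * μ)).comp_equiv (X := fun z => saddle z + Y z) T
    (e := e) fun z => by simp [hT, smul_smul, he]
  rw [← mul_assoc, he, one_mul] at h
  convert h using 2 with z
  simp only [smul_apply, ContinuousLinearMap.id_apply, smul_eq_mul, T.symm_apply_apply]
  linear_combination (-coneCutoff slopeCutoff (T z) * g z) * he

theorem solvableNear_saddle_add (hY : IsFlatTest {z | z.1 = 0 ∧ z.2.1 = 0} Y)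
    (hg : IsFlatTest {z | z.1 = 0 ∧ z.2.1 = 0} g) (μ : ℝ) :
    SolvableNear (fun z => saddle z + Y z) μ g := by
  have hid := solvableNear_coneCutoff_comp_mul hY hg μ (.refl ℝ _) (mul_one 1) (by simp)
  have hflip := solvableNear_coneCutoff_comp_mul hY hg μ (flipFst F) (mul_one 1)
    (by simp [flipFst_saddle])
  have hswap := solvableNear_coneCutoff_comp_mul hY hg μ (swapFstSnd F) (e := -1) (by norm_num)
    (by simp [swapFstSnd_saddle])
  have hboth := solvableNear_coneCutoff_comp_mul hY hg μ ((swapFstSnd F).trans (flipFst F))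
    (e := -1) (by norm_num) (by simp [swapFstSnd_saddle, flipFst_saddle])
  refine (((hid.add hflip).add hswap).add hboth).congr .rfl (.of_forall fun z => ?_)
  rcases em (z.1 = 0 ∧ z.2.1 = 0) with hz | hz
  · simp [(hg.flatAt z hz).apply_eq_zero]
  · simp only [← add_mul]
    exact (one_mul (g z) ▸ congrArg (· * g z) (coneCutoff_slopeCutoff_add hz)).symm

end SaddleSolvable

/-! ### Equivariant linearization -/

section Linearization

open Filter Topology

variable {E : Type*} [NormedAddCommGroup E] [NormedSpace ℝ E]

/-- A smooth map `ψ`, tangent to the identity at `0`, which conjugates the germ at `0` of the vector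
field `X` to the linear vector field `L`. It is only a local diffeomorphism. -/
structure IsLinearization (L : E →L[ℝ] E) (X ψ : E → E) : Prop where
  contDiff : ContDiff ℝ ∞ ψ
  map_zero : ψ 0 = 0
  fderiv_zero : fderiv ℝ ψ 0 = ContinuousLinearMap.id ℝ E
  eventually_conj : ∀ᶠ z in 𝓝 0, fderiv ℝ ψ z (X z) = L (ψ z)

theorem exists_isLinearization_of_solvableNear {ι : Type*} [Fintype ι] {X : (ι → ℝ) → ι → ℝ}
    (c : ι → ℝ) (h : ∀ i, SolvableNear X (c i) fun z => c i * z i - X z i) :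
    ∃ ψ, IsLinearization (ContinuousLinearMap.mul ℝ (ι → ℝ) c) X ψ := by
  choose f hf hf₀ hf₁ heq using h
  have hderiv : ∀ z, HasFDerivAt (fun z i => z i + f i z)
      (.pi fun i => .proj i + fderiv ℝ (f i) z) z := fun z => hasFDerivAt_pi.2 fun i =>
    (hasFDerivAt_apply i z).add ((hf i).differentiable (by simp) z).hasFDerivAt
  refine ⟨fun z i => z i + f i z, contDiff_pi.2 fun i => (contDiff_apply ℝ ℝ i).add (hf i),
    by ext i; simp [hf₀], by rw [(hderiv 0).fderiv]; ext z i; simp [hf₁], ?_⟩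
  filter_upwards [eventually_all.2 heq] with z hz
  ext i
  simp only [(hderiv z).fderiv, ContinuousLinearMap.pi_apply, add_apply,
    ContinuousLinearMap.proj_apply, ContinuousLinearMap.mul_apply', Pi.mul_apply]
  linear_combination hz i

/-- The average of `ψ` and its conjugate by `R`; for an involution `R` it commutes with `R`. -/
noncomputable def symmetrize (R : E →L[ℝ] E) (ψ : E → E) (z : E) : E :=
  (1 / 2 : ℝ) • (ψ z + R (ψ (R z)))

variable {L R S : E →L[ℝ] E} {X ψ : E → E}

lemma symmetrize_commute_self (hR : Function.Involutive R) :
    Function.Commute (symmetrize R ψ) R := fun z => by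
  simp only [symmetrize, hR z, map_smul, map_add, hR (ψ (R z)), add_comm]

lemma symmetrize_commute (hRS : Function.Commute R S) (hψ : Function.Commute ψ S) :
    Function.Commute (symmetrize R ψ) S := fun z => by
  simp only [symmetrize, map_smul, map_add, hRS _, hψ _]

theorem IsLinearization.symmetrize (h : IsLinearization L X ψ) (hR : Function.Involutive R)
    (hRL : Function.Commute R L) (hX : ∀ᶠ z in 𝓝 0, X (R z) = R (X z)) :
    IsLinearization L X (symmetrize R ψ) := by
  have hψ : Differentiable ℝ ψ := h.contDiff.differentiable (by simp)
  have hderiv : ∀ z, HasFDerivAt (NambuLin.symmetrize R ψ)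
      ((1 / 2 : ℝ) • (fderiv ℝ ψ z + R.comp ((fderiv ℝ ψ (R z)).comp R))) z := fun z =>
    ((hψ z).hasFDerivAt.add
      (R.hasFDerivAt.comp z ((hψ (R z)).hasFDerivAt.comp z R.hasFDerivAt))).const_smul _
  have hR₀ : Tendsto R (𝓝 0) (𝓝 0) := by simpa using R.continuous.tendsto 0
  refine ⟨contDiff_const.smul (h.contDiff.add (R.contDiff.comp (h.contDiff.comp R.contDiff))),
    by simp [NambuLin.symmetrize, h.map_zero], ?_, ?_⟩
  · ext z
    have hhalf : (2⁻¹ : ℝ) • z + (2⁻¹ : ℝ) • z = z := by module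
    simpa [(hderiv 0).fderiv, h.fderiv_zero, hR z] using hhalf
  · filter_upwards [h.eventually_conj, hR₀.eventually h.eventually_conj, hX] with z hz hRz hXz
    simp only [(hderiv z).fderiv, smul_apply, add_apply, ContinuousLinearMap.comp_apply, ← hXz, hz,
      hRz, hRL _, NambuLin.symmetrize, map_smul, map_add]

end Linearization

section LocalInverse

open Set Topology

theorem exists_nhds_isSmoothDiffeoOn {N : ℕ} {ψ : (Fin N → ℝ) → Fin N → ℝ} {a : Fin N → ℝ}
    {A : (Fin N → ℝ) ≃L[ℝ] Fin N → ℝ} (hψ : ContDiff ℝ ∞ ψ) (ha : fderiv ℝ ψ a = A) :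
    ∃ s ∈ 𝓝 a, ∀ W ⊆ s, IsOpen W → IsSmoothDiffeoOn ψ W := by
  have hderiv : ∀ z, HasFDerivAt ψ (fderiv ℝ ψ z) z := fun z =>
    (hψ.differentiable (by simp) z).hasFDerivAt
  have hA : HasFDerivAt ψ (A : (Fin N → ℝ) →L[ℝ] Fin N → ℝ) a := ha ▸ hderiv a
  let e := hψ.contDiffAt.toOpenPartialHomeomorph ψ hA (by simp)
  have hsource : e.source ∈ 𝓝 a :=
    e.open_source.mem_nhds (hψ.contDiffAt.mem_toOpenPartialHomeomorph_source hA (by simp))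
  have hequiv : fderiv ℝ ψ ⁻¹' range ((↑) : ((Fin N → ℝ) ≃L[ℝ] Fin N → ℝ) → _ →L[ℝ] _) ∈ 𝓝 a :=
    (hψ.continuous_fderiv (by simp)).continuousAt (ha ▸ ContinuousLinearEquiv.nhds A)
  refine ⟨_, Filter.inter_mem hsource hequiv, fun W hWs hW => ?_⟩
  have hinv : ∀ z ∈ W, e.symm (ψ z) = z := fun z hz => e.left_inv (hWs hz).1
  refine ⟨hW, e.isOpen_image_of_subset_source hW fun z hz => (hWs hz).1, hψ.contDiffOn, e.symm, ?_,
    hinv, forall_mem_image.2 fun z hz => congrArg ψ (hinv z hz)⟩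
  rintro _ ⟨z, hz, rfl⟩
  obtain ⟨B, hB⟩ := (hWs hz).2
  have hBz : HasFDerivAt ψ (B : (Fin N → ℝ) →L[ℝ] Fin N → ℝ) (e.symm (ψ z)) := by
    rw [hinv z hz, hB]
    exact hderiv z
  exact (e.contDiffAt_symm (e.map_source (hWs hz).1) hBz hψ.contDiffAt).contDiffWithinAt

end LocalInverse

section FlatExtension

open Filter Topology

theorem exists_isFlatTest_eventuallyEq {E G : Type*} [NormedAddCommGroup E] [NormedSpace ℝ E]
    [FiniteDimensional ℝ E] [NormedAddCommGroup G] [NormedSpace ℝ G] {U : Set E} (hU : IsOpen U)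
    (h₀ : 0 ∈ U) {S : Set E} (hS₀ : 0 ∈ S) (hS : ∀ (c : ℝ), ∀ z ∈ S, c • z ∈ S) {Z : E → G}
    (hZ : ContDiffOn ℝ ∞ Z U)
    (hflat : ∀ z ∈ U, z ∈ S → ∀ j : ℕ, iteratedFDerivWithin ℝ j Z U z = 0) :
    ∃ Y, IsFlatTest S Y ∧ Y =ᶠ[𝓝 0] Z := by
  obtain ⟨c, hc, hcs, hc₁, -, hcU⟩ := exists_contDiff_smul_self_mem (hU.mem_nhds h₀)
  have hflatAt : ∀ z ∈ U, z ∈ S → FlatAt Z z := fun z hz hzS j => by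
    rw [← iteratedFDerivWithin_of_isOpen j hU hz, hflat z hz hzS j]
  have hcz : ContDiff ℝ ∞ fun z : E => c z • z := hc.smul contDiff_id
  refine ⟨fun z => Z (c z • z), ⟨hZ.comp_contDiff hcz hcU, hasCompactSupport_comp_smul_self hcs
    (hflatAt 0 h₀ hS₀).apply_eq_zero, fun z hz => ?_⟩, ?_⟩
  · exact (hflatAt _ (hcU z) (hS (c z) z hz)).comp (f := fun z => c z • z)
      (hZ.contDiffAt (hU.mem_nhds (hcU z))) hcz.contDiffAt
  · filter_upwards [hc₁] with z hz
    rw [hz, Pi.one_apply, one_smul]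

end FlatExtension

section Coordinates

open Function Metric Topology

section Reflection

variable {ι : Type*} [Fintype ι] [DecidableEq ι]

/-- The reflection of `ℝ^ι` in the `k`-th coordinate. -/
noncomputable def coordReflection (k : ι) : (ι → ℝ) →L[ℝ] ι → ℝ :=
  .mul ℝ (ι → ℝ) (update 1 k (-1))

lemma coordReflection_apply (k : ι) (z : ι → ℝ) (i : ι) :
    coordReflection k z i = if i = k then -z i else z i := by
  rw [coordReflection, ContinuousLinearMap.mul_apply', Pi.mul_apply, update_apply]
  split_ifs <;> simp

lemma coordReflection_involutive (k : ι) : Involutive (coordReflection k) := fun z => by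
  ext i
  simp only [coordReflection_apply]
  split_ifs <;> simp

lemma coordReflection_commute_mul (k : ι) (c : ι → ℝ) :
    Function.Commute (coordReflection k) (ContinuousLinearMap.mul ℝ (ι → ℝ) c) := fun z =>
  mul_left_comm _ c z

lemma norm_coordReflection (k : ι) (z : ι → ℝ) : ‖coordReflection k z‖ = ‖z‖ := by
  have h : ∀ i, ‖coordReflection k z i‖₊ = ‖z i‖₊ := fun i => by
    rw [coordReflection_apply]
    split_ifs <;> simp
  simp only [Pi.norm_def, h]

lemma image_coordReflection_ball (k : ι) (r : ℝ) :
    coordReflection k '' ball 0 r = ball 0 r := by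
  rw [(coordReflection_involutive k).image_eq_preimage_symm]
  ext z
  simp [norm_coordReflection]

end Reflection

lemma sig_eq_coordReflection : (sig : (Fin (m + 2) → ℝ) → _) = coordReflection 0 := by
  ext z i
  rw [coordReflection_apply, sig]

lemma del_eq_coordReflection : (del : (Fin (m + 2) → ℝ) → _) = coordReflection 1 := by
  ext z i
  rw [coordReflection_apply, del]

/-- The eigenvalues `(1, -1, 0, …, 0)` of `Lvf`. -/
def lvfCoeff (m : ℕ) (i : Fin (m + 2)) : ℝ :=
  if i = 0 then 1 else if i = 1 then -1 else 0

lemma Lvf_eq_mul : (Lvf : (Fin (m + 2) → ℝ) → _) = ContinuousLinearMap.mul ℝ _ (lvfCoeff m) := by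
  ext z i
  simp only [Lvf, ContinuousLinearMap.mul_apply', Pi.mul_apply, lvfCoeff]
  split_ifs <;> simp_all

/-- The splitting `z ↦ (z₁, z₂, (z₃, …, z_{m+2}))`. -/
def splitCoords (m : ℕ) : (Fin (m + 2) → ℝ) ≃L[ℝ] ℝ × ℝ × (Fin m → ℝ) :=
  (Fin.consEquivL ℝ fun _ => ℝ).symm.trans <|
    (ContinuousLinearEquiv.refl ℝ ℝ).prodCongr (Fin.consEquivL ℝ fun _ => ℝ).symm

lemma splitCoords_Lvf (z : Fin (m + 2) → ℝ) :
    splitCoords m (Lvf z) = saddle (splitCoords m z) := by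
  refine Prod.ext rfl (Prod.ext rfl (funext fun i => ?_))
  change Lvf z i.succ.succ = 0
  simp [Lvf, Fin.succ_succ_ne_one]

theorem solvableNear_Lvf_add {Y : (Fin (m + 2) → ℝ) → Fin (m + 2) → ℝ}
    (hY : IsFlatTest {z | z 0 = 0 ∧ z 1 = 0} Y) {g : (Fin (m + 2) → ℝ) → ℝ}
    (hg : IsFlatTest {z | z 0 = 0 ∧ z 1 = 0} g) (μ : ℝ) :
    SolvableNear (fun z => Lvf z + Y z) μ g := by
  let T := splitCoords m
  have h := (solvableNear_saddle_add ((hY.comp_equiv T.symm).clm (T : _ →L[ℝ] _))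
    (hg.comp_equiv T.symm) μ).comp_equiv (X := fun z => Lvf z + Y z) T (e := 1) fun z => by
      simp [T, splitCoords_Lvf]
  simpa using h

theorem exists_isLinearization_of_isFlatTest {X Y : (Fin (m + 2) → ℝ) → Fin (m + 2) → ℝ}
    (hY : IsFlatTest {z | z 0 = 0 ∧ z 1 = 0} Y) (hXY : Y =ᶠ[𝓝 0] fun z => X z - Lvf z) :
    ∃ ψ, IsLinearization (.mul ℝ _ (lvfCoeff m)) X ψ := by
  refine exists_isLinearization_of_solvableNear _ fun i => (solvableNear_Lvf_add hY
    (hY.clm (-ContinuousLinearMap.proj i)) (lvfCoeff m i)).congr ?_ ?_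
  · filter_upwards [hXY] with z hz
    rw [hz, add_sub_cancel]
  · filter_upwards [hXY] with z hz
    rw [hz]
    simp [Lvf_eq_mul]

end Coordinates

/-- Lemma 2.2 of the paper, a special case of a theorem of
Belitskii–Kopanskii. A smooth vector field on a neighborhood of `0` in `ℝ^{m+2}`
which vanishes on `Σ = {z₁ = z₂ = 0}`, is `σ`- and `δ`-equivariant, and equals the
hyperbolic linear vector field `L(z) = z₁e₁ − z₂e₂` up to a term flat along `Σ`,
is locally smoothly linearizable at `0` in a `σ`- and `δ`-equivariant way. -/
theorem equivariant_vector_field_linearization (m : ℕ)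
    (U : Set (Fin (m + 2) → ℝ)) (hU : IsOpen U) (h0U : (0 : Fin (m + 2) → ℝ) ∈ U)
    (hUsig : sig '' U = U) (hUdel : del '' U = U)
    (X : (Fin (m + 2) → ℝ) → (Fin (m + 2) → ℝ)) (hX : ContDiffOn ℝ ∞ X U)
    (hvanish : ∀ z ∈ U, z 0 = 0 → z 1 = 0 → X z = 0)
    (hsig : ∀ z ∈ U, X (sig z) = sig (X z))
    (hdel : ∀ z ∈ U, X (del z) = del (X z))
    (hflat : ∀ z ∈ U, z 0 = 0 → z 1 = 0 →
      ∀ j : ℕ, iteratedFDerivWithin ℝ j (fun w => X w - Lvf w) U z = 0) :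
    ∃ W : Set (Fin (m + 2) → ℝ), W ⊆ U ∧ (0 : Fin (m + 2) → ℝ) ∈ W ∧
      sig '' W = W ∧ del '' W = W ∧
      ∃ ψ : (Fin (m + 2) → ℝ) → (Fin (m + 2) → ℝ), IsSmoothDiffeoOn ψ W ∧ ψ 0 = 0 ∧
        (∀ z ∈ W, ψ (sig z) = sig (ψ z)) ∧ (∀ z ∈ W, ψ (del z) = del (ψ z)) ∧
        ∀ z ∈ W, fderiv ℝ ψ z (X z) = Lvf (ψ z) := by
  have hL : ContDiff ℝ ∞ (Lvf : (Fin (m + 2) → ℝ) → _) :=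
    Lvf_eq_mul ▸ ContinuousLinearMap.contDiff _
  have hU₀ := hU.mem_nhds h0U
  obtain ⟨Y, hY, hXY⟩ := exists_isFlatTest_eventuallyEq hU h0U
    (S := {z | z 0 = 0 ∧ z 1 = 0}) ⟨rfl, rfl⟩ (fun c z hz => by simp [hz.1, hz.2])
    (hX.sub hL.contDiffOn) fun z hz hzS => hflat z hz hzS.1 hzS.2
  obtain ⟨ψ₀, hψ₀⟩ := exists_isLinearization_of_isFlatTest hY hXY
  simp only [sig_eq_coordReflection, del_eq_coordReflection, Lvf_eq_mul] at hsig hdel ⊢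
  have hψ := (hψ₀.symmetrize (coordReflection_involutive 0) (coordReflection_commute_mul 0 _)
    (Filter.mem_of_superset hU₀ hsig)).symmetrize (coordReflection_involutive 1)
    (coordReflection_commute_mul 1 _) (Filter.mem_of_superset hU₀ hdel)
  obtain ⟨s, hs, hdiffeo⟩ := exists_nhds_isSmoothDiffeoOn (A := .refl ℝ _) hψ.contDiff
    hψ.fderiv_zero
  obtain ⟨r, hr, hrs⟩ := Metric.mem_nhds_iff.1
    (Filter.inter_mem hU₀ (Filter.inter_mem hs hψ.eventually_conj))
  exact ⟨Metric.ball 0 r, fun z hz => (hrs hz).1, Metric.mem_ball_self hr,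
    image_coordReflection_ball 0 r, image_coordReflection_ball 1 r, _,
    hdiffeo _ (fun z hz => (hrs hz).2.1) Metric.isOpen_ball, hψ.map_zero,
    fun z _ => symmetrize_commute (coordReflection_commute_mul 1 _)
      (symmetrize_commute_self (coordReflection_involutive 0)) z,
    fun z _ => symmetrize_commute_self (coordReflection_involutive 1) z,
    fun z hz => (hrs hz).2.2⟩

end NambuLin
end

section
/- Let m ≥ 0 and let F : ℝ × ℝᵐ → ℝ be a C^∞ function which is even in its first variable: F(−t, u) = F(t, u) for all t ∈ ℝ and u ∈ ℝᵐ. Then there exists a C^∞ function G : ℝ × ℝᵐ → ℝ such that F(t, u) = G(t², u) for all (t, u) ∈ ℝ × ℝᵐ. -/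
open scoped ContDiff

/-!
Iterating Hadamard's lemma expands an even `F` in powers of `t²`, with smooth coefficients `aₖ(u)`
and smooth remainders. By Borel's theorem some smooth `B(s, u)` has the same Taylor coefficients in
`s`, once the `aₖ` are multiplied by a compactly supported `ψ(u)`. The difference
`R(t, u) = ψ(u) F(t, u) - B(t², u)` is then divisible by every `t ^ (2 * n + 1)`, and
`√s ^ (2 * n + 1) Q(√s, u)` is `Cⁿ` across `s = 0`, because each derivative costs only a factor
`√s ^ 2`. So `R(√s, u) + B(s, u)` is smooth and represents `ψ F`. The requirement on the values of
`G` is convex at each point, so a partition of unity removes `ψ`.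
-/

open Asymptotics ContinuousLinearMap Filter MeasureTheory Set
open scoped Manifold Topology

universe u

section ParametricIntegral

theorem exists_eventually_forall_uIcc_norm_le {X E : Type*} [TopologicalSpace X]
    [SeminormedAddCommGroup E] {f : X → ℝ → E} (hf : Continuous f.uncurry) (x : X) (a b : ℝ) :
    ∃ C, ∀ᶠ y in 𝓝 x, ∀ t ∈ uIcc a b, ‖f y t‖ ≤ C := by
  obtain ⟨C, hC⟩ := isCompact_uIcc.exists_bound_of_continuousOn
    (s := uIcc a b) (hf.uncurry_left x).continuousOn
  refine ⟨C + 1, isCompact_uIcc.eventually_forall_of_forall_eventually fun t ht => ?_⟩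
  have hlt : ‖f.uncurry (x, t)‖ < C + 1 := (hC t ht).trans_lt (lt_add_one C)
  exact (hf.norm.continuousAt.eventually_lt continuousAt_const hlt).mono fun _ => le_of_lt

theorem hasFDerivAt_intervalIntegral_of_continuous {X E : Type*} [NormedAddCommGroup X]
    [NormedSpace ℝ X] [NormedAddCommGroup E] [NormedSpace ℝ E] {μ : Measure ℝ}
    [IsLocallyFiniteMeasure μ] {f : X → ℝ → E} {f' : X → ℝ → X →L[ℝ] E}
    (hf : Continuous f.uncurry) (hf' : Continuous f'.uncurry)
    (hff' : ∀ x t, HasFDerivAt (f · t) (f' x t) x) (a b : ℝ) (x : X) :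
    HasFDerivAt (fun x => ∫ t in a..b, f x t ∂μ) (∫ t in a..b, f' x t ∂μ) x := by
  obtain ⟨C, hC⟩ := exists_eventually_forall_uIcc_norm_le hf' x a b
  exact intervalIntegral.hasFDerivAt_integral_of_dominated_of_fderiv_le (bound := fun _ => C) hC
    (.of_forall fun y => (hf.uncurry_left y).aestronglyMeasurable)
    ((hf.uncurry_left x).intervalIntegrable a b)
    (hf'.uncurry_left x).aestronglyMeasurable
    (.of_forall fun t ht y hy => hy t (uIoc_subset_uIcc ht))
    intervalIntegrable_const
    (.of_forall fun t _ y _ => hff' y t)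

variable {X E : Type u} [NormedAddCommGroup X] [NormedSpace ℝ X]
  [NormedAddCommGroup E] [NormedSpace ℝ E]
  {μ : Measure ℝ} [IsLocallyFiniteMeasure μ] [NullSingletonClass μ]

theorem contDiff_nat_parametric_intervalIntegral (n : ℕ) (f : X → ℝ → E)
    (hf : ContDiff ℝ n f.uncurry) (a b : ℝ) : ContDiff ℝ n fun x => ∫ t in a..b, f x t ∂μ := by
  induction n generalizing E with
  | zero =>
    exact contDiff_zero.2 <|
      intervalIntegral.continuous_parametric_intervalIntegral_of_continuous' hf.continuous a b
  | succ n ih =>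
    let f' : X → ℝ → X →L[ℝ] E := fun x t => (fderiv ℝ f.uncurry (x, t)).comp (inl ℝ X ℝ)
    have hf' : ContDiff ℝ n f'.uncurry :=
      (hf.fderiv_right le_rfl).clm_comp contDiff_const
    have hff' (x : X) (t : ℝ) : HasFDerivAt (f · t) (f' x t) x := by
      have hfx := (hf.differentiable (by simp) (x, t)).hasFDerivAt
      exact hfx.comp (f := fun y => (y, t)) x (hasFDerivAt_prodMk_left x t)
    exact contDiff_succ_iff_hasFDerivAt.2 ⟨_, ih f' hf',
      hasFDerivAt_intervalIntegral_of_continuous hf.continuous hf'.continuous hff' a b⟩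

theorem contDiff_parametric_intervalIntegral {n : ℕ∞} {f : X → ℝ → E}
    (hf : ContDiff ℝ n f.uncurry) (a b : ℝ) : ContDiff ℝ n fun x => ∫ t in a..b, f x t ∂μ :=
  contDiff_iff_forall_nat_le.2 fun m hm =>
    contDiff_nat_parametric_intervalIntegral m f (hf.of_le (mod_cast hm)) a b

end ParametricIntegral

section HadamardQuotient

theorem odd_deriv_of_even {𝕜 E : Type*} [NontriviallyNormedField 𝕜] [NormedAddCommGroup E]
    [NormedSpace 𝕜 E] {f : 𝕜 → E} (hf : f.Even) : (deriv f).Odd := fun t => by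
  rw [← neg_neg (deriv f (-t)), ← deriv_comp_neg, funext hf]

theorem even_deriv_of_odd {𝕜 E : Type*} [NontriviallyNormedField 𝕜] [NormedAddCommGroup E]
    [NormedSpace 𝕜 E] {f : 𝕜 → E} (hf : f.Odd) : (deriv f).Even := fun t => by
  rw [← neg_neg (deriv f (-t)), ← deriv_comp_neg, funext hf, deriv.fun_neg, neg_neg]

variable {V E : Type u} [NormedAddCommGroup E] [NormedSpace ℝ E] {F : ℝ × V → E}

/-- The quotient `(F (t, u) - F (0, u)) / t` of Hadamard's lemma, encoded as the integral
`∫₀¹ ∂ₜF (τ t, u) dτ` so that it is smooth across `t = 0`. -/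
noncomputable def hadamardQuotient (F : ℝ × V → E) (p : ℝ × V) : E :=
  ∫ τ in (0 : ℝ)..1, deriv (fun t => F (t, p.2)) (τ * p.1)

theorem odd_hadamardQuotient {u : V} (hF : (fun t => F (t, u)).Even) :
    (fun t => hadamardQuotient F (t, u)).Odd := fun t => by
  simp only [hadamardQuotient, mul_neg, odd_deriv_of_even hF _, intervalIntegral.integral_neg]

theorem even_hadamardQuotient {u : V} (hF : (fun t => F (t, u)).Odd) :
    (fun t => hadamardQuotient F (t, u)).Even := fun t => by
  simp only [hadamardQuotient, mul_neg, even_deriv_of_odd hF _]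

theorem even_iterate_hadamardQuotient {u : V} (hF : (fun t => F (t, u)).Even) (k : ℕ) :
    (fun t => hadamardQuotient^[2 * k] F (t, u)).Even := by
  induction k with
  | zero => exact hF
  | succ k ih =>
    simp only [mul_add_one, Function.iterate_succ_apply']
    exact even_hadamardQuotient (odd_hadamardQuotient ih)

variable [NormedAddCommGroup V] [NormedSpace ℝ V]

theorem deriv_section_eq_fderiv (hF : Differentiable ℝ F) (t : ℝ) (u : V) :
    deriv (fun t => F (t, u)) t = fderiv ℝ F (t, u) (1, 0) :=
  ((hF (t, u)).hasFDerivAt.comp_hasDerivAt t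
    ((hasDerivAt_id t).prodMk (hasDerivAt_const t u))).deriv

theorem contDiff_hadamardQuotient {n : ℕ∞} (hF : ContDiff ℝ (n + 1) F) :
    ContDiff ℝ n (hadamardQuotient F) := by
  refine contDiff_parametric_intervalIntegral ?_ 0 1
  simp only [Function.uncurry_def, deriv_section_eq_fderiv (hF.differentiable (by simp))]
  exact ((hF.fderiv_right le_rfl).comp
    (by fun_prop : ContDiff ℝ n fun q : (ℝ × V) × ℝ => (q.2 * q.1.1, q.1.2))).clm_apply
      contDiff_const

theorem contDiff_iterate_hadamardQuotient (hF : ContDiff ℝ ∞ F) (k : ℕ) :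
    ContDiff ℝ ∞ (hadamardQuotient^[k] F) := by
  induction k with
  | zero => exact hF
  | succ k ih =>
    rw [Function.iterate_succ_apply']
    exact contDiff_hadamardQuotient ih

theorem eq_add_smul_hadamardQuotient [CompleteSpace E] (hF : ContDiff ℝ 1 F) (t : ℝ) (u : V) :
    F (t, u) = F (0, u) + t • hadamardQuotient F (t, u) := by
  have hsection : ContDiff ℝ 1 fun t => F (t, u) := hF.comp (by fun_prop)
  rw [hadamardQuotient, intervalIntegral.smul_integral_comp_mul_right,
    intervalIntegral.integral_deriv_eq_sub (fun s _ => hsection.differentiable one_ne_zero s)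
      ((hsection.continuous_deriv le_rfl).intervalIntegrable _ _)]
  simp

theorem eq_add_sq_smul_hadamardQuotient [CompleteSpace E] (hF : ContDiff ℝ 2 F) {u : V}
    (heven : (fun t => F (t, u)).Even) (t : ℝ) :
    F (t, u) = F (0, u) + t ^ 2 • hadamardQuotient (hadamardQuotient F) (t, u) := by
  have : IsAddTorsionFree E := .of_isTorsionFree ℝ E
  have hzero : hadamardQuotient F (0, u) = 0 := (odd_hadamardQuotient heven).map_zero
  rw [eq_add_smul_hadamardQuotient (hF.of_le one_le_two) t u,
    eq_add_smul_hadamardQuotient (contDiff_hadamardQuotient (n := 1) hF) t u, hzero, zero_add,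
    smul_smul, sq]

theorem eq_sum_add_smul_iterate_hadamardQuotient [CompleteSpace E] (hF : ContDiff ℝ ∞ F) {u : V}
    (heven : (fun t => F (t, u)).Even) (t : ℝ) (N : ℕ) :
    F (t, u) = ∑ k ∈ Finset.range N, (t ^ 2) ^ k • hadamardQuotient^[2 * k] F (0, u) +
      (t ^ 2) ^ N • hadamardQuotient^[2 * N] F (t, u) := by
  induction N with
  | zero => simp
  | succ N ih =>
    have hsmooth : ContDiff ℝ 2 (hadamardQuotient^[2 * N] F) :=
      contDiff_infty.1 (contDiff_iterate_hadamardQuotient hF (2 * N)) 2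
    rw [ih, eq_add_sq_smul_hadamardQuotient hsmooth (even_iterate_hadamardQuotient heven N) t,
      Finset.sum_range_succ, mul_add_one, Function.iterate_succ_apply',
      Function.iterate_succ_apply', smul_add, smul_smul, ← pow_succ, add_assoc]

end HadamardQuotient

section SqrtComposition

variable {V E : Type u} [NormedAddCommGroup V] [NormedSpace ℝ V]
  [NormedAddCommGroup E] [NormedSpace ℝ E]

/-- The factor left after extracting `√s ^ (2 * n + 1)` from the derivative of
`(s, u) ↦ √s ^ (2 * n + 3) • Q (√s, u)`, as a function of `(√s, u)`. -/
noncomputable def sqrtDerivFactor (n : ℕ) (Q : ℝ × V → E) (p : ℝ × V) : ℝ × V →L[ℝ] E :=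
  ((2 * n + 3) / 2 : ℝ) • (fst ℝ ℝ V).smulRight (Q p) +
    (fderiv ℝ Q p).comp ((p.1 / 2) • (inl ℝ ℝ V).comp (fst ℝ ℝ V) +
      p.1 ^ 2 • (inr ℝ ℝ V).comp (snd ℝ ℝ V))

theorem contDiff_sqrtDerivFactor {m : WithTop ℕ∞} (n : ℕ) {Q : ℝ × V → E}
    (hQ : ContDiff ℝ (m + 1) Q) : ContDiff ℝ m (sqrtDerivFactor n Q) := by
  have hQ₀ : ContDiff ℝ m Q := hQ.of_le le_self_add
  unfold sqrtDerivFactor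
  fun_prop

theorem hasFDerivAt_sqrt_pow_smul_of_pos (n : ℕ) {Q : ℝ × V → E} {x : ℝ × V}
    (hQ : DifferentiableAt ℝ Q (√x.1, x.2)) (hx : 0 < x.1) :
    HasFDerivAt (fun y : ℝ × V => √y.1 ^ (2 * n + 3) • Q (√y.1, y.2))
      (√x.1 ^ (2 * n + 1) • sqrtDerivFactor n Q (√x.1, x.2)) x := by
  have hsqrt : HasFDerivAt (fun y : ℝ × V => √y.1) ((1 / (2 * √x.1)) • fst ℝ ℝ V) x :=
    hasFDerivAt_fst.sqrt hx.ne'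
  have hcomp := hQ.hasFDerivAt.comp x (hsqrt.prodMk hasFDerivAt_snd)
  have hne : √x.1 ≠ 0 := (Real.sqrt_pos.2 hx).ne'
  have hhalf : √x.1 ^ 2 * ((√x.1)⁻¹ * 2⁻¹) = √x.1 / 2 := by field_simp
  have hfactor : (√x.1 / 2) • (inl ℝ ℝ V).comp (fst ℝ ℝ V) +
      √x.1 ^ 2 • (inr ℝ ℝ V).comp (snd ℝ ℝ V) =
        √x.1 ^ 2 • ((1 / (2 * √x.1)) • fst ℝ ℝ V).prod (snd ℝ ℝ V) := by
    ext v <;> simp [hhalf]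
  have hcoeff : (2 * n + 3) * √x.1 ^ (2 * n + 2) * ((√x.1)⁻¹ * 2⁻¹) =
      √x.1 ^ (2 * n + 1) * ((2 * n + 3) / 2) := by
    field_simp
    ring
  refine ((hsqrt.pow (2 * n + 3)).smul hcomp).congr_fderiv ?_
  rw [sqrtDerivFactor, hfactor, comp_smul, smul_add, smul_smul _ (√x.1 ^ 2), ← pow_add, add_comm]
  congr 1
  ext v <;> simp [smul_smul, hcoeff]

theorem hasFDerivAt_sqrt_pow_smul_of_nonpos (n : ℕ) {Q : ℝ × V → E} (hQ : Continuous Q)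
    {x : ℝ × V} (hx : x.1 ≤ 0) :
    HasFDerivAt (fun y : ℝ × V => √y.1 ^ (2 * n + 3) • Q (√y.1, y.2)) (0 : ℝ × V →L[ℝ] E) x := by
  -- The function is `√y.1 ^ 2 • o(1)`, and `√y.1 ^ 2` is `O(‖y - x‖)`.
  have hsqrt : √x.1 = 0 := Real.sqrt_eq_zero_of_nonpos hx
  have hsq : (fun y : ℝ × V => √y.1 ^ 2) =O[𝓝 x] fun y => ‖y - x‖ := by
    refine .of_bound 1 (.of_forall fun y => ?_)
    have hy : √y.1 ^ 2 ≤ |y.1 - x.1| := by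
      rw [Real.sq_sqrt', sup_le_iff]
      exact ⟨(by linarith : y.1 ≤ y.1 - x.1).trans (le_abs_self _), abs_nonneg _⟩
    simpa using hy.trans (norm_fst_le (y - x))
  have hvanish : (fun y : ℝ × V => √y.1 ^ (2 * n + 1) • Q (√y.1, y.2)) =o[𝓝 x]
      fun _ => (1 : ℝ) := by
    have hcont : Continuous fun y : ℝ × V => √y.1 ^ (2 * n + 1) • Q (√y.1, y.2) := by fun_prop
    simpa [isLittleO_one_iff, hsqrt] using hcont.tendsto x
  refine .of_isLittleO ((hsq.smul_isLittleO hvanish).congr (fun y => ?_) fun y => ?_).of_norm_right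
  · rw [smul_smul, ← pow_add, hsqrt, zero_pow (by lia), zero_smul, sub_zero, zero_apply, sub_zero]
    congr 2
    ring
  · simp

theorem contDiff_sqrt_pow_smul (n : ℕ) {Q : ℝ × V → E} (hQ : ContDiff ℝ n Q) :
    ContDiff ℝ n fun x : ℝ × V => √x.1 ^ (2 * n + 1) • Q (√x.1, x.2) := by
  induction n generalizing E with
  | zero =>
    have hcont := hQ.continuous
    exact contDiff_zero.2 (by fun_prop)
  | succ n ih =>
    refine contDiff_succ_iff_hasFDerivAt.2 ⟨_, ih (contDiff_sqrtDerivFactor n hQ), fun x => ?_⟩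
    rcases lt_or_ge 0 x.1 with hx | hx
    · exact hasFDerivAt_sqrt_pow_smul_of_pos n (hQ.differentiable (by simp) _) hx
    · exact (hasFDerivAt_sqrt_pow_smul_of_nonpos n hQ.continuous hx).congr_fderiv
        (by simp [Real.sqrt_eq_zero_of_nonpos hx])

theorem contDiff_comp_sqrt_of_flat {R : ℝ × V → E}
    (hR : ∀ n : ℕ, ∃ Q : ℝ × V → E, ContDiff ℝ n Q ∧ ∀ p, R p = p.1 ^ (2 * n + 1) • Q p) :
    ContDiff ℝ ∞ fun x : ℝ × V => R (√x.1, x.2) := by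
  refine contDiff_infty.2 fun n => ?_
  obtain ⟨Q, hQ, hRQ⟩ := hR n
  simpa only [hRQ] using contDiff_sqrt_pow_smul n hQ

end SqrtComposition

section BorelTerm

theorem contDiff_div_pow_of_eventuallyEq_zero {𝕜 : Type*} [NontriviallyNormedField 𝕜] {f : 𝕜 → 𝕜}
    {n : WithTop ℕ∞} (hf : ContDiff 𝕜 n f) (hzero : f =ᶠ[𝓝 0] 0) (N : ℕ) :
    ContDiff 𝕜 n fun s => f s / s ^ N := by
  refine contDiff_iff_contDiffAt.2 fun s => ?_
  rcases eq_or_ne s 0 with rfl | hs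
  · refine (contDiffAt_const (c := (0 : 𝕜))).congr_of_eventuallyEq ?_
    filter_upwards [hzero] with s hs
    simp [hs]
  · exact hf.contDiffAt.div (contDiffAt_id.pow N) (pow_ne_zero N hs)

theorem norm_iteratedFDeriv_comp_clm_le {𝕜 X Y E : Type*} [NontriviallyNormedField 𝕜]
    [NormedAddCommGroup X] [NormedSpace 𝕜 X] [NormedAddCommGroup Y] [NormedSpace 𝕜 Y]
    [NormedAddCommGroup E] [NormedSpace 𝕜 E] {i : ℕ} {f : Y → E} (hf : ContDiff 𝕜 i f)
    (g : X →L[𝕜] Y) (x : X) :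
    ‖iteratedFDeriv 𝕜 i (f ∘ g) x‖ ≤ ‖iteratedFDeriv 𝕜 i f (g x)‖ * ‖g‖ ^ i := by
  rw [g.iteratedFDeriv_comp_right hf x le_rfl]
  simpa using (iteratedFDeriv 𝕜 i f (g x)).norm_compContinuousLinearMap_le fun _ => g

variable {V E : Type*} [NormedAddCommGroup E] [NormedSpace ℝ E]
  {χ : ContDiffBump (0 : ℝ)} {a : V → E} {n : ℕ∞} {i k : ℕ} {c : ℝ}

/-- A summand of Borel's series: the monomial `s ^ k • a u`, cut off to `|s| ≲ 1 / c`. -/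
noncomputable def borelTerm (χ : ContDiffBump (0 : ℝ)) (c : ℝ) (k : ℕ) (a : V → E)
    (p : ℝ × V) : E :=
  (p.1 ^ k * χ (c * p.1)) • a p.2

theorem hasCompactSupport_borelTerm_one [TopologicalSpace V] (χ : ContDiffBump (0 : ℝ)) (k : ℕ)
    (ha : HasCompactSupport a) : HasCompactSupport (borelTerm χ 1 k a) := by
  refine .intro' (χ.hasCompactSupport.prod ha)
    ((isClosed_tsupport _).prod (isClosed_tsupport _)) fun p hp => ?_
  rcases not_and_or.1 hp with hχ | hu
  · simp [borelTerm, image_eq_zero_of_notMem_tsupport hχ]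
  · simp [borelTerm, image_eq_zero_of_notMem_tsupport hu]

variable [NormedAddCommGroup V] [NormedSpace ℝ V]

theorem contDiff_borelTerm (χ : ContDiffBump (0 : ℝ)) (c : ℝ) (k : ℕ) (ha : ContDiff ℝ n a) :
    ContDiff ℝ n (borelTerm χ c k a) :=
  ((contDiff_fst.pow k).mul (χ.contDiff.comp (contDiff_const.mul contDiff_fst))).smul
    (ha.comp contDiff_snd)

theorem borelTerm_eq_smul_comp (χ : ContDiffBump (0 : ℝ)) (hc : c ≠ 0) (k : ℕ) (a : V → E) :
    borelTerm χ c k a = (c ^ k)⁻¹ • (borelTerm χ 1 k a ∘ (c • fst ℝ ℝ V).prod (snd ℝ ℝ V)) := by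
  ext p
  simp [borelTerm, mul_pow, smul_smul, ← mul_assoc, hc]

theorem norm_smul_fst_prod_snd_le (hc : 1 ≤ c) : ‖(c • fst ℝ ℝ V).prod (snd ℝ ℝ V)‖ ≤ c := by
  rw [opNorm_prod, Prod.norm_def, norm_smul, Real.norm_of_nonneg (by positivity)]
  exact max_le (mul_le_of_le_one_right (by positivity) (norm_fst_le ℝ ℝ V))
    ((norm_snd_le ℝ ℝ V).trans hc)

theorem norm_iteratedFDeriv_borelTerm_le {M : ℝ} (ha : ContDiff ℝ i a) (hc : 1 ≤ c)
    (hM : ∀ p, ‖iteratedFDeriv ℝ i (borelTerm χ 1 k a) p‖ ≤ M) (p : ℝ × V) :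
    ‖iteratedFDeriv ℝ i (borelTerm χ c k a) p‖ ≤ (c ^ k)⁻¹ * (M * c ^ i) := by
  have hone : ContDiff ℝ i (borelTerm χ 1 k a) := contDiff_borelTerm χ 1 k ha
  have hM₀ : 0 ≤ M := (norm_nonneg _).trans (hM p)
  rw [borelTerm_eq_smul_comp χ (by positivity) k a,
    iteratedFDeriv_const_smul_apply (hone.comp (ContinuousLinearMap.contDiff _)).contDiffAt,
    norm_smul, norm_inv, Real.norm_of_nonneg (by positivity)]
  refine mul_le_mul_of_nonneg_left ((norm_iteratedFDeriv_comp_clm_le hone _ p).trans ?_)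
    (by positivity)
  gcongr
  · exact hM _
  · exact norm_smul_fst_prod_snd_le hc

theorem eventually_norm_iteratedFDeriv_borelTerm_le (χ : ContDiffBump (0 : ℝ))
    (ha : ContDiff ℝ i a) (hsupp : HasCompactSupport a) (hik : i < k) {ε : ℝ} (hε : 0 < ε) :
    ∀ᶠ c in atTop, ∀ p, ‖iteratedFDeriv ℝ i (borelTerm χ c k a) p‖ ≤ ε := by
  obtain ⟨M, hM⟩ := ((hasCompactSupport_borelTerm_one χ k hsupp).iteratedFDeriv
    (𝕜 := ℝ) i).exists_bound_of_continuous
      ((contDiff_borelTerm χ 1 k ha).continuous_iteratedFDeriv le_rfl)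
  filter_upwards [eventually_ge_atTop 1, eventually_ge_atTop (M / ε)] with c hc hMc p
  have hMc' : M ≤ c * ε := (div_le_iff₀ hε).1 hMc
  refine (norm_iteratedFDeriv_borelTerm_le ha hc hM p).trans ?_
  rw [inv_mul_le_iff₀ (by positivity)]
  calc M * c ^ i ≤ c * ε * c ^ i := by gcongr
    _ = c ^ (i + 1) * ε := by ring
    _ ≤ c ^ k * ε := by gcongr; exact hik

theorem exists_borelTerm_eq_add_pow_smul (χ : ContDiffBump (0 : ℝ)) (c : ℝ) (k : ℕ)
    (ha : ContDiff ℝ n a) (N : ℕ) :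
    ∃ C : ℝ × V → E, ContDiff ℝ n C ∧
      ∀ s u, borelTerm χ c k a (s, u) = s ^ k • a u + s ^ N • C (s, u) := by
  have hsmooth : ContDiff ℝ n fun s => χ (c * s) - 1 :=
    (χ.contDiff.comp (contDiff_const.mul contDiff_id)).sub contDiff_const
  have hzero : (fun s => χ (c * s) - 1) =ᶠ[𝓝 0] 0 := by
    have htendsto : Tendsto (fun s => c * s) (𝓝 0) (𝓝 0) := by
      simpa using (continuous_const_mul c).tendsto 0
    filter_upwards [htendsto.eventually χ.eventuallyEq_one] with s hs
    simp [hs]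
  refine ⟨fun p => (p.1 ^ k * ((χ (c * p.1) - 1) / p.1 ^ N)) • a p.2,
    ((contDiff_fst.pow k).mul ((contDiff_div_pow_of_eventuallyEq_zero hsmooth hzero N).comp
      contDiff_fst)).smul (ha.comp contDiff_snd), fun s u => ?_⟩
  have hcancel : s ^ N * ((χ (c * s) - 1) / s ^ N) = χ (c * s) - 1 :=
    mul_div_cancel_of_imp' fun hs => by simpa [eq_zero_of_pow_eq_zero hs] using hzero.self_of_nhds
  rw [smul_smul, mul_left_comm, hcancel, ← add_smul, borelTerm]
  congr 1
  ring

end BorelTerm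

section BorelSeries

variable {V E : Type*} [NormedAddCommGroup V] [NormedSpace ℝ V]
  [NormedAddCommGroup E] [NormedSpace ℝ E]
  {χ : ContDiffBump (0 : ℝ)} {a : ℕ → V → E} {c : ℕ → ℝ}

/-- The cut-off scales `c` shrink the derivatives of Borel's series `∑ s ^ m • a m u` geometrically.
Exponents `k ≤ m` are allowed so that the bounds survive division of the tail by a power of `s`. -/
def IsBorelScale (χ : ContDiffBump (0 : ℝ)) (a : ℕ → V → E) (c : ℕ → ℝ) : Prop :=
  ∀ m, ∀ k ≤ m, ∀ i < k, ∀ p, ‖iteratedFDeriv ℝ i (borelTerm χ (c m) k (a m)) p‖ ≤ (1 / 2) ^ m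

theorem exists_isBorelScale (χ : ContDiffBump (0 : ℝ)) (ha : ∀ m, ContDiff ℝ ∞ (a m))
    (hsupp : ∀ m, HasCompactSupport (a m)) : ∃ c, IsBorelScale χ a c := by
  have hscale (m : ℕ) : ∀ᶠ c in atTop, ∀ k ∈ Iic m, ∀ i ∈ Iio k, ∀ p,
      ‖iteratedFDeriv ℝ i (borelTerm χ c k (a m)) p‖ ≤ (1 / 2) ^ m :=
    (eventually_all_finite (finite_Iic m)).2 fun k _ =>
      (eventually_all_finite (finite_Iio k)).2 fun i hik =>
        eventually_norm_iteratedFDeriv_borelTerm_le χ (contDiff_infty.1 (ha m) i) (hsupp m) hik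
          (by positivity)
  choose c hc using fun m => (hscale m).exists
  exact ⟨c, hc⟩

namespace IsBorelScale

theorem contDiff_tsum [CompleteSpace E] (hc : IsBorelScale χ a c)
    (ha : ∀ m, ContDiff ℝ ∞ (a m)) (N : ℕ) :
    ContDiff ℝ ∞ fun p => ∑' k, borelTerm χ (c (k + N)) k (a (k + N)) p := by
  refine contDiff_tsum_of_eventually (N := ⊤) (v := fun _ k => (1 / 2 : ℝ) ^ (k + N))
    (fun k => contDiff_borelTerm χ _ k (ha _))
    (fun _ _ => (summable_nat_add_iff N).2 summable_geometric_two) fun i _ => ?_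
  rw [Nat.cofinite_eq_atTop]
  filter_upwards [eventually_gt_atTop i] with k hik p
  exact hc (k + N) k (Nat.le_add_right k N) i hik p

theorem summable [CompleteSpace E] (hc : IsBorelScale χ a c) (p : ℝ × V) :
    Summable fun k => borelTerm χ (c k) k (a k) p := by
  refine .of_norm_bounded_eventually_nat summable_geometric_two ?_
  filter_upwards [eventually_gt_atTop 0] with k hk
  simpa using hc k k le_rfl 0 hk p

end IsBorelScale

theorem exists_contDiff_forall_eq_sum_add_pow_smul [CompleteSpace E]
    (ha : ∀ k, ContDiff ℝ ∞ (a k)) (hsupp : ∀ k, HasCompactSupport (a k)) :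
    ∃ B : ℝ × V → E, ContDiff ℝ ∞ B ∧ ∀ N, ∃ C : ℝ × V → E, ContDiff ℝ ∞ C ∧
      ∀ s u, B (s, u) = ∑ k ∈ Finset.range N, s ^ k • a k u + s ^ N • C (s, u) := by
  let χ : ContDiffBump (0 : ℝ) := default
  obtain ⟨c, hc⟩ := exists_isBorelScale χ ha hsupp
  refine ⟨fun p => ∑' k, borelTerm χ (c k) k (a k) p, hc.contDiff_tsum ha 0, fun N => ?_⟩
  choose C hC hCeq using fun k => exists_borelTerm_eq_add_pow_smul χ (c k) k (ha k) N
  refine ⟨fun p => ∑ k ∈ Finset.range N, C k p + ∑' k, borelTerm χ (c (k + N)) k (a (k + N)) p,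
    (ContDiff.sum fun k _ => hC k).add (hc.contDiff_tsum ha N), fun s u => ?_⟩
  have htail : ∑' k, borelTerm χ (c (k + N)) (k + N) (a (k + N)) (s, u) =
      s ^ N • ∑' k, borelTerm χ (c (k + N)) k (a (k + N)) (s, u) := by
    rw [← tsum_const_smul'']
    refine tsum_congr fun k => ?_
    simp only [borelTerm, smul_smul, pow_add]
    congr 1
    ring
  calc ∑' k, borelTerm χ (c k) k (a k) (s, u)
    _ = ∑ k ∈ Finset.range N, borelTerm χ (c k) k (a k) (s, u) +
        ∑' k, borelTerm χ (c (k + N)) (k + N) (a (k + N)) (s, u) :=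
      ((hc.summable (s, u)).sum_add_tsum_nat_add N).symm
    _ = _ := by
      rw [htail]
      simp only [hCeq, Finset.sum_add_distrib, smul_add, Finset.smul_sum, add_assoc]

end BorelSeries

section EvenFunction

variable {V E : Type u} [NormedAddCommGroup V] [NormedSpace ℝ V]
  [NormedAddCommGroup E] [NormedSpace ℝ E] [CompleteSpace E] {F : ℝ × V → E}

theorem exists_contDiff_smul_eq_comp_sq (hF : ContDiff ℝ ∞ F)
    (heven : ∀ t u, F (-t, u) = F (t, u)) {ψ : V → ℝ} (hψ : ContDiff ℝ ∞ ψ)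
    (hsupp : HasCompactSupport ψ) :
    ∃ G : ℝ × V → E, ContDiff ℝ ∞ G ∧ ∀ t u, ψ u • F (t, u) = G (t ^ 2, u) := by
  have hH (k : ℕ) : ContDiff ℝ ∞ (hadamardQuotient^[k] F) := contDiff_iterate_hadamardQuotient hF k
  obtain ⟨B, hB, hBexp⟩ := exists_contDiff_forall_eq_sum_add_pow_smul
    (a := fun k u => ψ u • hadamardQuotient^[2 * k] F (0, u))
    (fun k => hψ.smul ((hH (2 * k)).comp (contDiff_prodMk_right 0)))
    (fun k => hsupp.smul_right)
  let R : ℝ × V → E := fun p => ψ p.2 • F p - B (p.1 ^ 2, p.2)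
  have hflat (n : ℕ) : ∃ Q : ℝ × V → E, ContDiff ℝ n Q ∧ ∀ p, R p = p.1 ^ (2 * n + 1) • Q p := by
    obtain ⟨C, hC, hCexp⟩ := hBexp (n + 1)
    refine ⟨fun p => p.1 • (ψ p.2 • hadamardQuotient^[2 * (n + 1)] F p - C (p.1 ^ 2, p.2)), ?_, ?_⟩
    · exact contDiff_infty.1 (contDiff_fst.smul (((hψ.comp contDiff_snd).smul (hH _)).sub
        (hC.comp ((contDiff_fst.pow 2).prodMk contDiff_snd)))) n
    · rintro ⟨t, u⟩
      simp only [R]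
      rw [hCexp, eq_sum_add_smul_iterate_hadamardQuotient hF (fun t => heven t u) t (n + 1),
        smul_add, Finset.smul_sum]
      simp only [smul_comm (ψ u), add_sub_add_left_eq_sub]
      module
  refine ⟨fun x => R (√x.1, x.2) + B x, (contDiff_comp_sqrt_of_flat hflat).add hB, fun t u => ?_⟩
  have habs : F (|t|, u) = F (t, u) := by
    rcases abs_choice t with h | h <;> simp [h, heven]
  simp [R, Real.sqrt_sq_eq_abs, habs]

theorem whitney_even_general [FiniteDimensional ℝ V] (hF : ContDiff ℝ ∞ F)
    (heven : ∀ t u, F (-t, u) = F (t, u)) :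
    ∃ G : ℝ × V → E, ContDiff ℝ ∞ G ∧ ∀ t u, F (t, u) = G (t ^ 2, u) := by
  let S (x : ℝ × V) : Set E := {y | ∀ t, t ^ 2 = x.1 → F (t, x.2) = y}
  have hconvex (x : ℝ × V) : Convex ℝ (S x) := fun y hy z hz a b _ _ hab t ht => by
    rw [← hy t ht, ← hz t ht, Convex.combo_self hab]
  have hlocal (x : ℝ × V) : ∃ U ∈ 𝓝 x, ∃ G : ℝ × V → E,
      ContMDiffOn 𝓘(ℝ, ℝ × V) 𝓘(ℝ, E) ∞ G U ∧ ∀ y ∈ U, G y ∈ S y := by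
    let ψ : ContDiffBump x.2 := default
    obtain ⟨G, hG, hGF⟩ := exists_contDiff_smul_eq_comp_sq hF heven ψ.contDiff ψ.hasCompactSupport
    refine ⟨{y | ψ y.2 = 1}, continuousAt_snd.eventually ψ.eventuallyEq_one, G,
      hG.contMDiff.contMDiffOn, fun y (hy : ψ y.2 = 1) t ht => ?_⟩
    simpa [ht, hy] using hGF t y.2
  obtain ⟨G, hG⟩ := exists_contMDiffMap_forall_mem_convex_of_local 𝓘(ℝ, ℝ × V) hconvex hlocal
  exact ⟨G, G.contMDiff.contDiff, fun t u => hG (t ^ 2, u) t rfl⟩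

end EvenFunction

/-- parametrized Whitney even-function theorem. A `C^∞` function
`F(t,u)` on `ℝ × ℝᵐ` which is even in `t` is of the form `F(t,u) = G(t², u)` for a
`C^∞` function `G`. -/
theorem whitney_even (m : ℕ) (F : ℝ × (Fin m → ℝ) → ℝ) (hF : ContDiff ℝ ∞ F)
    (heven : ∀ (t : ℝ) (u : Fin m → ℝ), F (-t, u) = F (t, u)) :
    ∃ G : ℝ × (Fin m → ℝ) → ℝ, ContDiff ℝ ∞ G ∧
      ∀ (t : ℝ) (u : Fin m → ℝ), F (t, u) = G (t ^ 2, u) :=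
  whitney_even_general hF heven
end

section
/- Let m ≥ 0 and let F : ℝ × ℝᵐ → ℝ be a C^∞ function which is odd in its first variable: F(−t, u) = −F(t, u) for all t ∈ ℝ and u ∈ ℝᵐ. Then there exists a C^∞ function G : ℝ × ℝᵐ → ℝ such that F(t, u) = t · G(t², u) for all (t, u) ∈ ℝ × ℝᵐ. -/
open scoped ContDiff

/-! A cutoff in `t` reduces to `F` with compact `t`-support, since away from `t = 0` one can take
`G (s, u) = F (√s, u) / √s`. Write `F (t, u) = t • H (t, u)` with `H` even in `t`. Then `H (√s, u)`
has to be continued smoothly to `s < 0`, where `√s` is imaginary. The average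
`∫ ψ(r) H (r √(-s), u) dr` against a Schwartz kernel `ψ` with even moments `∫ r²ᵏ ψ(r) dr = (-1)ᵏ`
does this. Since `∂ₜ H = 2t • K` with `K` even, the `s`-derivative of the continuation is the
continuation of `K` built with the kernel `-r² ψ(r)`, which has the same even moments. Hence the
continuation is `C^∞` by induction, only the matching of values at `s = 0` being needed at each
stage. -/

open Filter Topology MeasureTheory Set
open scoped FourierTransform

universe u

noncomputable section

section Partials

variable {V E : Type*} [NormedAddCommGroup V] [NormedSpace ℝ V]
  [NormedAddCommGroup E] [NormedSpace ℝ E]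

/-- The partial derivative `∂ₜ F`. -/
def partialFst (F : ℝ × V → E) (p : ℝ × V) : E :=
  deriv (fun t => F (t, p.2)) p.1

/-- The partial derivative `∂ᵤ F`. -/
def partialSnd (F : ℝ × V → E) (p : ℝ × V) : V →L[ℝ] E :=
  fderiv ℝ (fun u => F (p.1, u)) p.2

/-- The total derivative `(τ, v) ↦ τ • a + L v` with partial derivatives `a` and `L`. -/
def totalDeriv : (E × (V →L[ℝ] E)) ≃L[ℝ] (ℝ × V →L[ℝ] E) :=
  (ContinuousLinearMap.toSpanSingletonCLE.prodCongr (.refl ℝ _)).trans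
    (ContinuousLinearMap.coprodEquivL ℝ)

theorem totalDeriv_apply (a : E) (L : V →L[ℝ] E) (v : ℝ × V) :
    totalDeriv (a, L) v = v.1 • a + L v.2 := by
  simp [totalDeriv]

theorem norm_totalDeriv_le (a : E) (L : V →L[ℝ] E) : ‖totalDeriv (a, L)‖ ≤ ‖a‖ + ‖L‖ := by
  refine ContinuousLinearMap.opNorm_le_bound _ (by positivity) fun v => ?_
  calc ‖totalDeriv (a, L) v‖ ≤ ‖v.1‖ * ‖a‖ + ‖L‖ * ‖v.2‖ := by
        rw [totalDeriv_apply, ← norm_smul]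
        exact norm_add_le_of_le le_rfl (L.le_opNorm _)
    _ ≤ ‖v‖ * ‖a‖ + ‖L‖ * ‖v‖ := by
        gcongr
        exacts [norm_fst_le v, norm_snd_le v]
    _ = (‖a‖ + ‖L‖) * ‖v‖ := by ring

theorem partialFst_eq_fderiv {F : ℝ × V → E} {p : ℝ × V} (hF : DifferentiableAt ℝ F p) :
    partialFst F p = fderiv ℝ F p (1, 0) :=
  (hF.hasFDerivAt.comp_hasDerivAt p.1
    ((hasDerivAt_id p.1).prodMk (hasDerivAt_const p.1 p.2))).deriv

theorem partialSnd_eq_fderiv {F : ℝ × V → E} {p : ℝ × V} (hF : DifferentiableAt ℝ F p) :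
    partialSnd F p = (fderiv ℝ F p).comp (.inr ℝ ℝ V) :=
  (hF.hasFDerivAt.comp p.2 (hasFDerivAt_prodMk_right p.1 p.2)).fderiv

theorem hasFDerivAt_totalDeriv {F : ℝ × V → E} {p : ℝ × V} (hF : DifferentiableAt ℝ F p) :
    HasFDerivAt F (totalDeriv (partialFst F p, partialSnd F p)) p := by
  have h : totalDeriv (partialFst F p, partialSnd F p) = fderiv ℝ F p := by
    ext <;> simp [totalDeriv_apply, partialFst_eq_fderiv hF, partialSnd_eq_fderiv hF,
      show ((0 : ℝ), (0 : V)) = 0 from rfl]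
  exact h ▸ hF.hasFDerivAt

theorem contDiff_partialFst {F : ℝ × V → E} (hF : ContDiff ℝ ∞ F) :
    ContDiff ℝ ∞ (partialFst F) := by
  have h : partialFst F = fun p => fderiv ℝ F p (1, 0) :=
    funext fun p => partialFst_eq_fderiv (hF.differentiable (by simp) p)
  rw [h]
  exact (hF.fderiv_right (by simp)).clm_apply contDiff_const

theorem contDiff_partialSnd {F : ℝ × V → E} (hF : ContDiff ℝ ∞ F) :
    ContDiff ℝ ∞ (partialSnd F) := by
  have h : partialSnd F = fun p => (fderiv ℝ F p).comp (.inr ℝ ℝ V) :=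
    funext fun p => partialSnd_eq_fderiv (hF.differentiable (by simp) p)
  rw [h]
  exact (hF.fderiv_right (by simp)).clm_comp contDiff_const

theorem hasFDerivAt_comp_map_fst {F : ℝ × V → E} {g : ℝ → ℝ} {g' : ℝ} {p : ℝ × V} {a : E}
    {L : V →L[ℝ] E} (hF : HasFDerivAt F (totalDeriv (a, L)) (g p.1, p.2))
    (hg : HasDerivAt g g' p.1) :
    HasFDerivAt (fun q : ℝ × V => F (g q.1, q.2)) (totalDeriv (g' • a, L)) p := by
  have hφ := (hg.comp_hasFDerivAt p hasFDerivAt_fst).prodMk (hasFDerivAt_snd (𝕜 := ℝ) (p := p))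
  refine (hF.comp p hφ).congr_fderiv ?_
  ext v <;> simp [totalDeriv_apply]

theorem hasFDerivAt_of_forall_fst_ne_zero {f : ℝ × V → E} {f' : ℝ × V → (ℝ × V →L[ℝ] E)}
    (hf : Continuous f) (hf' : Continuous f')
    (hderiv : ∀ p : ℝ × V, p.1 ≠ 0 → HasFDerivAt f (f' p) p) (p : ℝ × V) :
    HasFDerivAt f (f' p) p := by
  have hwithin : ∀ s : Set (ℝ × V), IsOpen s → Convex ℝ s → (∀ q ∈ s, q.1 ≠ 0) →
      HasFDerivWithinAt f (f' p) (closure s) p := fun s hopen hconv hs => by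
    refine hasFDerivWithinAt_closure_of_tendsto_fderiv
      (fun q hq => (hderiv q (hs q hq)).differentiableAt.differentiableWithinAt) hconv hopen
      (fun q _ => hf.continuousWithinAt) ?_
    refine hf'.continuousWithinAt.tendsto.congr' ?_
    filter_upwards [self_mem_nhdsWithin] with q hq using (hderiv q (hs q hq)).fderiv.symm
  have hneg := hwithin (Iio 0 ×ˢ univ) (isOpen_Iio.prod isOpen_univ)
    ((convex_Iio 0).prod convex_univ) fun q hq => ne_of_lt hq.1
  have hpos := hwithin (Ioi 0 ×ˢ univ) (isOpen_Ioi.prod isOpen_univ)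
    ((convex_Ioi 0).prod convex_univ) fun q hq => ne_of_gt hq.1
  have hcover : closure (Iio (0 : ℝ) ×ˢ (univ : Set V)) ∪ closure (Ioi 0 ×ˢ univ) = univ := by
    rw [closure_prod_eq, closure_prod_eq, closure_Iio, closure_Ioi, ← union_prod,
      Iic_union_Ici, closure_univ, univ_prod_univ]
  exact hasFDerivWithinAt_univ.1 (hcover ▸ hneg.union hpos)

end Partials

section TestFamily

variable {V E : Type*} [NormedAddCommGroup V] [NormedSpace ℝ V]
  [NormedAddCommGroup E] [NormedSpace ℝ E]

/-- A smooth family, with parameter in `V`, of test functions on `ℝ` supported in a common bounded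
interval. -/
structure IsTestFamily (H : ℝ × V → E) : Prop where
  contDiff : ContDiff ℝ ∞ H
  bounded_support : ∃ R : ℝ, ∀ t, R < |t| → ∀ u, H (t, u) = 0

namespace IsTestFamily

variable {H : ℝ × V → E}

theorem eventually_norm_le (hH : IsTestFamily H) (u₀ : V) :
    ∃ C, ∀ᶠ u in 𝓝 u₀, ∀ t, ‖H (t, u)‖ ≤ C := by
  obtain ⟨R, hR⟩ := hH.bounded_support
  have hcont := hH.contDiff.continuous
  obtain ⟨C, hC⟩ := (isCompact_Icc (a := -R) (b := R)).exists_bound_of_continuousOn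
    (f := fun t => H (t, u₀)) (by fun_prop)
  have hnear : ∀ᶠ u in 𝓝 u₀, ∀ t ∈ Icc (-R) R, ‖H (t, u)‖ ≤ max C 0 + 1 := by
    refine isCompact_Icc.eventually_forall_of_forall_eventually fun t ht => ?_
    have hlt : ‖H (t, u₀)‖ < max C 0 + 1 := by linarith [hC t ht, le_max_left C 0]
    have hswap : Continuous fun z : V × ℝ => ‖H (z.2, z.1)‖ := by fun_prop
    exact (hswap.continuousAt.eventually_lt continuousAt_const hlt).mono fun _ h => h.le
  refine ⟨max C 0 + 1, hnear.mono fun u hu t => ?_⟩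
  by_cases ht : |t| ≤ R
  · exact hu t (abs_le.1 ht)
  · rw [hR t (not_le.1 ht), norm_zero]
    positivity

protected theorem partialFst (hH : IsTestFamily H) : IsTestFamily (partialFst H) := by
  obtain ⟨R, hR⟩ := hH.bounded_support
  refine ⟨contDiff_partialFst hH.contDiff, R, fun t ht u => ?_⟩
  have hzero : (fun t => H (t, u)) =ᶠ[𝓝 t] fun _ => 0 := by
    filter_upwards [continuous_abs.continuousAt.eventually (lt_mem_nhds ht)] with s hs
      using hR s hs u
  exact hzero.deriv_eq.trans (deriv_const t 0)

protected theorem partialSnd (hH : IsTestFamily H) : IsTestFamily (partialSnd H) := by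
  obtain ⟨R, hR⟩ := hH.bounded_support
  refine ⟨contDiff_partialSnd hH.contDiff, R, fun t ht u => ?_⟩
  have hzero : (fun u => H (t, u)) = fun _ => 0 := funext (hR t ht)
  simp only [partialSnd, hzero, fderiv_fun_const, Pi.zero_apply]

theorem const_smul (hH : IsTestFamily H) (c : ℝ) : IsTestFamily fun p => c • H p := by
  obtain ⟨R, hR⟩ := hH.bounded_support
  exact ⟨hH.contDiff.const_smul c, R, fun t ht u => by rw [hR t ht, smul_zero]⟩

end IsTestFamily

end TestFamily

section DilationIntegral

/-- All moments `∫ rⁿ ψ(r) dr` converge absolutely. -/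
def HasFiniteMoments (ψ : ℝ → ℝ) : Prop :=
  ∀ n : ℕ, Integrable fun r => r ^ n * ψ r

theorem HasFiniteMoments.integrable {ψ : ℝ → ℝ} (hψ : HasFiniteMoments ψ) : Integrable ψ := by
  simpa using hψ 0

theorem HasFiniteMoments.mul_left {ψ : ℝ → ℝ} (hψ : HasFiniteMoments ψ) :
    HasFiniteMoments fun r => r * ψ r := fun n => by
  simpa only [pow_succ, mul_assoc] using hψ (n + 1)

/-- The average `∫ ψ(r) H(r t, u) dr` of the dilations of `H` in the first variable. -/
def dilationIntegral {V E : Type*} [NormedAddCommGroup E] [NormedSpace ℝ E]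
    (ψ : ℝ → ℝ) (H : ℝ × V → E) (p : ℝ × V) : E :=
  ∫ r, ψ r • H (r * p.1, p.2)

variable {V E : Type u} [NormedAddCommGroup V] [NormedSpace ℝ V]
  [NormedAddCommGroup E] [NormedSpace ℝ E] {ψ : ℝ → ℝ} {H : ℝ × V → E}

theorem IsTestFamily.integrable_smul_dilation (hH : IsTestFamily H) (hψ : Integrable ψ)
    (p : ℝ × V) : Integrable fun r => ψ r • H (r * p.1, p.2) := by
  obtain ⟨C, hC⟩ := hH.eventually_norm_le p.2
  have hcont := hH.contDiff.continuous
  exact hψ.smul_bdd C (by fun_prop : Continuous fun r => H (r * p.1, p.2)).aestronglyMeasurable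
    (.of_forall fun r => hC.self_of_nhds (r * p.1))

theorem hasFDerivAt_dilationIntegral [CompleteSpace E] (hψ : Integrable ψ)
    (hψ' : Integrable fun r => r * ψ r) (hH : IsTestFamily H) (p : ℝ × V) :
    HasFDerivAt (dilationIntegral ψ H)
      (totalDeriv (dilationIntegral (fun r => r * ψ r) (partialFst H) p,
        dilationIntegral ψ (partialSnd H) p)) p := by
  let a : ℝ × V → ℝ → E := fun q r => (r * ψ r) • partialFst H (r * q.1, q.2)
  let L : ℝ × V → ℝ → V →L[ℝ] E := fun q r => ψ r • partialSnd H (r * q.1, q.2)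
  have ha : Integrable (a p) := hH.partialFst.integrable_smul_dilation hψ' p
  have hL : Integrable (L p) := hH.partialSnd.integrable_smul_dilation hψ p
  obtain ⟨A, hA⟩ := hH.partialFst.eventually_norm_le p.2
  obtain ⟨B, hB⟩ := hH.partialSnd.eventually_norm_le p.2
  have hderiv : HasFDerivAt (dilationIntegral ψ H) (∫ r, totalDeriv (a p r, L p r)) p := by
    refine hasFDerivAt_integral_of_dominated_of_fderiv_le
      (F' := fun q r => totalDeriv (a q r, L q r))
      (bound := fun r => ‖r * ψ r‖ * A + ‖ψ r‖ * B)
      (continuous_snd.continuousAt.eventually (hA.and hB))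
      (.of_forall fun q => (hH.integrable_smul_dilation hψ q).aestronglyMeasurable)
      (hH.integrable_smul_dilation hψ p)
      (totalDeriv.continuous.comp_aestronglyMeasurable (ha.prodMk hL).aestronglyMeasurable)
      (.of_forall fun r q hq => ?_)
      ((hψ'.norm.mul_const A).add (hψ.norm.mul_const B))
      (.of_forall fun r q _ => ?_)
    · refine (norm_totalDeriv_le _ _).trans ?_
      simp only [a, L, norm_smul]
      gcongr
      exacts [hq.1 _, hq.2 _]
    · have hHr := hasFDerivAt_totalDeriv (hH.contDiff.differentiable (by simp) (r * q.1, q.2))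
      have hcomp := (hasFDerivAt_comp_map_fst hHr (hasDerivAt_const_mul r)).const_smul (ψ r)
      refine hcomp.congr_fderiv ?_
      rw [← map_smul, Prod.smul_mk, smul_smul, mul_comm (ψ r)]
  refine hderiv.congr_fderiv ?_
  exact (totalDeriv.integral_comp_comm fun r => (a p r, L p r)).trans
    (congrArg totalDeriv (integral_pair ha hL))

theorem contDiff_dilationIntegral [CompleteSpace E] (hψ : HasFiniteMoments ψ)
    (hH : IsTestFamily H) : ContDiff ℝ ∞ (dilationIntegral ψ H) := by
  refine contDiff_infty.2 fun n => ?_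
  induction n generalizing E ψ with
  | zero =>
    exact contDiff_zero.2 <| continuous_iff_continuousAt.2 fun p =>
      (hasFDerivAt_dilationIntegral hψ.integrable hψ.mul_left.integrable hH p).continuousAt
  | succ n ih =>
    rw [Nat.cast_add, Nat.cast_one, contDiff_succ_iff_hasFDerivAt]
    exact ⟨fun p => totalDeriv (_, _), (totalDeriv (V := V) (E := E)).contDiff.comp
      ((ih hψ.mul_left hH.partialFst).prodMk (ih hψ hH.partialSnd)),
      hasFDerivAt_dilationIntegral hψ.integrable hψ.mul_left.integrable hH⟩

end DilationIntegral

section Parity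

variable {V E : Type*}

theorem eq_zero_of_odd [AddCommGroup E] [Module ℝ E] {F : ℝ × V → E}
    (hodd : ∀ t u, F (-t, u) = -F (t, u)) (u : V) : F (0, u) = 0 := by
  have : IsAddTorsionFree E := .of_isTorsionFree ℝ E
  exact self_eq_neg.1 (by simpa using hodd 0 u)

theorem even_of_odd_smul [AddCommGroup E] [Module ℝ E] {F H : ℝ × V → E}
    (hF : ∀ t u, F (t, u) = t • H (t, u)) (hodd : ∀ t u, F (-t, u) = -F (t, u))
    (t : ℝ) (u : V) : H (-t, u) = H (t, u) := by
  rcases eq_or_ne t 0 with rfl | ht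
  · rw [neg_zero]
  · have h : t • H (-t, u) = t • H (t, u) := by
      rw [← hF t u, ← neg_inj, ← hodd t u, hF, neg_smul]
    exact smul_right_injective E ht h

theorem partialFst_odd_of_even [NormedAddCommGroup E] [NormedSpace ℝ E] {H : ℝ × V → E}
    (heven : ∀ t u, H (-t, u) = H (t, u)) (t : ℝ) (u : V) :
    partialFst H (-t, u) = -partialFst H (t, u) := by
  have h := deriv_comp_neg (fun t => H (t, u)) t
  simp only [heven] at h
  rw [partialFst, partialFst, h, neg_neg]

end Parity

section OddDivision

variable {V E : Type u} [NormedAddCommGroup V] [NormedSpace ℝ V]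
  [NormedAddCommGroup E] [NormedSpace ℝ E] {F H : ℝ × V → E}

theorem hasFiniteMoments_indicator_Ioc (a b : ℝ) :
    HasFiniteMoments ((Ioc a b).indicator 1) := fun n => by
  have hpow : (fun r : ℝ => r ^ n * (Ioc a b).indicator 1 r) =
      (Ioc a b).indicator fun r => r ^ n := by
    ext r
    simp [indicator_apply]
  rw [hpow, integrable_indicator_iff measurableSet_Ioc]
  exact (continuous_pow n).integrableOn_Ioc

theorem eq_smul_dilationIntegral_partialFst [CompleteSpace E] (hF : ContDiff ℝ ∞ F)
    (hF₀ : ∀ u, F (0, u) = 0) (t : ℝ) (u : V) :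
    F (t, u) = t • dilationIntegral ((Ioc 0 1).indicator 1) (partialFst F) (t, u) := by
  have hderiv : ∀ r ∈ uIcc (0 : ℝ) 1,
      HasDerivAt (fun r => F (r * t, u)) (t • partialFst F (r * t, u)) r := fun r _ => by
    have hFt : DifferentiableAt ℝ (fun t => F (t, u)) (r * t) := by
      have hF_diff := hF.differentiable (by simp)
      fun_prop
    exact hFt.hasDerivAt.scomp r (hasDerivAt_mul_const t)
  have hcont := (contDiff_partialFst hF).continuous
  have hFTC := intervalIntegral.integral_eq_sub_of_hasDerivAt hderiv
    ((by fun_prop : Continuous fun r => t • partialFst F (r * t, u)).intervalIntegrable _ _)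
  have havg : dilationIntegral ((Ioc 0 1).indicator 1) (partialFst F) (t, u) =
      ∫ r in (0 : ℝ)..1, partialFst F (r * t, u) := by
    rw [intervalIntegral.integral_of_le zero_le_one, ← integral_indicator measurableSet_Ioc]
    exact integral_congr_ae (.of_forall fun r => by by_cases hr : r ∈ Ioc (0 : ℝ) 1 <;> simp [hr])
  rw [havg, ← intervalIntegral.integral_smul, hFTC, one_mul, zero_mul, hF₀, sub_zero]

theorem IsTestFamily.exists_eq_smul [CompleteSpace E] (hF : IsTestFamily F)
    (hF₀ : ∀ u, F (0, u) = 0) :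
    ∃ H : ℝ × V → E, IsTestFamily H ∧ ∀ t u, F (t, u) = t • H (t, u) := by
  have hfactor := eq_smul_dilationIntegral_partialFst hF.contDiff hF₀
  obtain ⟨R, hR⟩ := hF.bounded_support
  refine ⟨_, ⟨contDiff_dilationIntegral (hasFiniteMoments_indicator_Ioc 0 1) hF.partialFst,
    max R 0, fun t ht u => ?_⟩, hfactor⟩
  have ht₀ : t ≠ 0 := abs_pos.1 ((le_max_right R 0).trans_lt ht)
  exact (smul_eq_zero_iff_right ht₀).1
    ((hfactor t u).symm.trans (hR t ((le_max_left R 0).trans_lt ht) u))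

theorem IsTestFamily.exists_partialFst_eq [CompleteSpace E] (hH : IsTestFamily H)
    (heven : ∀ t u, H (-t, u) = H (t, u)) :
    ∃ K : ℝ × V → E, IsTestFamily K ∧ (∀ t u, K (-t, u) = K (t, u)) ∧
      ∀ t u, partialFst H (t, u) = (2 * t) • K (t, u) := by
  have hodd := partialFst_odd_of_even heven
  obtain ⟨K, hK, hfactor⟩ := hH.partialFst.exists_eq_smul (eq_zero_of_odd hodd)
  have hK_even := even_of_odd_smul hfactor hodd
  refine ⟨fun p => (2⁻¹ : ℝ) • K p, hK.const_smul _, fun t u => by simp only [hK_even],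
    fun t u => ?_⟩
  rw [hfactor, smul_smul, mul_right_comm, mul_inv_cancel₀ two_ne_zero, one_mul]

end OddDivision

section ReflectionKernel

variable {E : Type*} [NormedAddCommGroup E]

/-- A kernel with even moments `∫ r²ᵏ ψ(r) dr = (-1)ᵏ`: on even functions `h`, the average
`∫ ψ(r) h(r t) dr` has the Taylor expansion at `0` that `h(i t)` would have. -/
structure IsReflectionKernel (ψ : ℝ → ℝ) : Prop where
  hasFiniteMoments : HasFiniteMoments ψ
  integral_even_moment : ∀ k : ℕ, ∫ r, r ^ (2 * k) * ψ r = (-1) ^ k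

theorem IsReflectionKernel.integral_eq_one {ψ : ℝ → ℝ} (hψ : IsReflectionKernel ψ) :
    ∫ r, ψ r = 1 := by
  simpa using hψ.integral_even_moment 0

theorem IsReflectionKernel.neg_sq_mul {ψ : ℝ → ℝ} (hψ : IsReflectionKernel ψ) :
    IsReflectionKernel fun r => -(r ^ 2 * ψ r) where
  hasFiniteMoments n := by
    simpa only [mul_neg, ← mul_assoc, ← pow_add] using (hψ.hasFiniteMoments (n + 2)).fun_neg
  integral_even_moment k := by
    have hshift := hψ.integral_even_moment (k + 1)
    simp only [mul_neg, ← mul_assoc, ← pow_add, integral_neg]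
    rw [show 2 * k + 2 = 2 * (k + 1) by ring, hshift, pow_succ, mul_neg_one, neg_neg]

theorem iteratedDeriv_fourier_zero [NormedSpace ℂ E] {f : ℝ → E}
    (hf : ∀ n : ℕ, Integrable fun x => x ^ n • f x) (n : ℕ) :
    iteratedDeriv n (𝓕 f) 0 = (-2 * Real.pi * Complex.I) ^ n • ∫ x, x ^ n • f x := by
  rw [Real.iteratedDeriv_fourier (fun k _ => hf k) (le_refl (n : ℕ∞)), Real.fourier_eq,
    ← integral_smul]
  refine integral_congr_ae (.of_forall fun x => ?_)
  simp only [inner_zero_right, neg_zero, AddChar.map_zero_eq_one, one_smul, mul_pow _ (x : ℂ),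
    mul_smul, ← Complex.ofReal_pow, Complex.coe_smul]

theorem iteratedDeriv_cexp_const_mul_ofReal (n : ℕ) (c : ℂ) :
    iteratedDeriv n (fun x : ℝ => Complex.exp (c * x)) =
      fun x : ℝ => c ^ n * Complex.exp (c * x) := by
  induction n with
  | zero => simp only [iteratedDeriv_zero, pow_zero, one_mul]
  | succ n ih =>
    ext x
    have hmul : HasDerivAt (fun x : ℝ => c * x) c x := by
      simpa using (Complex.ofRealCLM.hasDerivAt (x := x)).const_mul c
    rw [iteratedDeriv_succ, ih, (hmul.cexp.const_mul (c ^ n)).deriv, pow_succ]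
    ring

theorem integrable_pow_smul_schwartzMap [NormedSpace ℝ E] (ψ : SchwartzMap ℝ E) (n : ℕ) :
    Integrable fun r : ℝ => r ^ n • ψ r :=
  (ψ.integrable_pow_mul volume n).mono' (by fun_prop)
    (.of_forall fun r => by rw [norm_smul, norm_pow])

-- The moments of `ψ` are the derivatives of `𝓕 ψ` at `0`, up to powers of `-2πi`; the values `iⁿ`
-- thus correspond to `𝓕 ψ (x) = exp (2πx)` near `0`.
theorem exists_schwartzMap_integral_pow_smul_eq_I_pow :
    ∃ ψ : SchwartzMap ℝ ℂ, ∀ n : ℕ, ∫ r : ℝ, r ^ n • ψ r = Complex.I ^ n := by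
  let χ : ContDiffBump (0 : ℝ) := ⟨1, 2, one_pos, one_lt_two⟩
  let e : ℝ → ℂ := fun x => Complex.exp ((2 * Real.pi : ℝ) * x)
  have he : ContDiff ℝ ∞ e := (contDiff_const.mul Complex.ofRealCLM.contDiff).cexp
  have hsupp : HasCompactSupport fun x => χ x • e x := χ.hasCompactSupport.smul_right
  let g : SchwartzMap ℝ ℂ := hsupp.toSchwartzMap (χ.contDiff.smul he)
  have hg : g =ᶠ[𝓝 0] e := χ.eventuallyEq_one.mono fun x hx => by simp [g, hx]
  refine ⟨𝓕⁻ g, fun n => ?_⟩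
  have hmoment := iteratedDeriv_fourier_zero (integrable_pow_smul_schwartzMap (𝓕⁻ g)) n
  rw [← SchwartzMap.fourier_coe, FourierTransform.fourier_fourierInv_eq, hg.iteratedDeriv_eq,
    iteratedDeriv_cexp_const_mul_ofReal] at hmoment
  have hne : (-2 * Real.pi * Complex.I) ^ n ≠ 0 := by simp [Real.pi_ne_zero]
  refine mul_left_cancel₀ hne (hmoment.symm.trans ?_)
  rw [← mul_pow]
  simp [mul_assoc]

theorem exists_isReflectionKernel : ∃ ψ, IsReflectionKernel ψ := by
  obtain ⟨ψ, hψ⟩ := exists_schwartzMap_integral_pow_smul_eq_I_pow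
  have hint := integrable_pow_smul_schwartzMap ψ
  have hre : ∀ (n : ℕ) (r : ℝ), r ^ n * (ψ r).re = RCLike.re (r ^ n • ψ r) := fun n r => by
    rw [RCLike.re_eq_complex_re, Complex.smul_re, smul_eq_mul]
  refine ⟨fun r => (ψ r).re, fun n => ?_, fun k => ?_⟩
  · simpa only [hre] using (hint n).re
  · simp only [hre]
    rw [integral_re (hint _), hψ, pow_mul, Complex.I_sq]
    norm_cast

end ReflectionKernel

section SqrtLift

variable {V E : Type u} [NormedAddCommGroup E] [NormedSpace ℝ E] {ψ : ℝ → ℝ} {H K : ℝ × V → E}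

/-- For `H` even in `t`, the function `(s, u) ↦ H(√s, u)`, continued to `s < 0` by
`∫ ψ(r) H(r √(-s), u) dr`. Since `√s = 0` for `s ≤ 0`, the terms that do not belong to the sign of
`s` cancel when `∫ ψ = 1`. -/
def sqrtLift (ψ : ℝ → ℝ) (H : ℝ × V → E) (p : ℝ × V) : E :=
  H (√p.1, p.2) + dilationIntegral ψ H (√(-p.1), p.2) - H (0, p.2)

theorem dilationIntegral_zero_left [CompleteSpace E] (hψ : ∫ r, ψ r = 1) (u : V) :
    dilationIntegral ψ H (0, u) = H (0, u) := by
  simp only [dilationIntegral, mul_zero, integral_smul_const, hψ, one_smul]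

theorem sqrtLift_of_nonneg [CompleteSpace E] (hψ : ∫ r, ψ r = 1) {p : ℝ × V} (hp : 0 ≤ p.1) :
    sqrtLift ψ H p = H (√p.1, p.2) := by
  rw [sqrtLift, Real.sqrt_eq_zero_of_nonpos (neg_nonpos.2 hp), dilationIntegral_zero_left hψ,
    add_sub_cancel_right]

theorem sqrtLift_of_nonpos {p : ℝ × V} (hp : p.1 ≤ 0) :
    sqrtLift ψ H p = dilationIntegral ψ H (√(-p.1), p.2) := by
  rw [sqrtLift, Real.sqrt_eq_zero_of_nonpos hp, add_sub_cancel_left]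

theorem sqrtLift_sq [CompleteSpace E] (hψ : ∫ r, ψ r = 1)
    (heven : ∀ t u, H (-t, u) = H (t, u)) (t : ℝ) (u : V) :
    sqrtLift ψ H (t ^ 2, u) = H (t, u) := by
  rw [sqrtLift_of_nonneg hψ (sq_nonneg t), Real.sqrt_sq_eq_abs]
  rcases abs_choice t with h | h <;> simp only [h, heven]

theorem dilationIntegral_partialFst (hK : ∀ t u, partialFst H (t, u) = (2 * t) • K (t, u))
    (p : ℝ × V) : dilationIntegral (fun r => r * ψ r) (partialFst H) p =
      -(2 * p.1) • dilationIntegral (fun r => -(r ^ 2 * ψ r)) K p := by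
  simp only [dilationIntegral, ← integral_smul, hK, smul_smul]
  congr! 3
  ring

variable [NormedAddCommGroup V] [NormedSpace ℝ V]

theorem continuous_sqrtLift [CompleteSpace E] (hψ : HasFiniteMoments ψ) (hH : IsTestFamily H) :
    Continuous (sqrtLift ψ H) := by
  have hH_cont := hH.contDiff.continuous
  have havg_cont := (contDiff_dilationIntegral hψ hH).continuous
  unfold sqrtLift
  fun_prop

theorem hasFDerivAt_sqrtLift_of_ne_zero [CompleteSpace E] (hψ : IsReflectionKernel ψ)
    (hH : IsTestFamily H) (hK : ∀ t u, partialFst H (t, u) = (2 * t) • K (t, u))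
    {p : ℝ × V} (hp : p.1 ≠ 0) :
    HasFDerivAt (sqrtLift ψ H) (totalDeriv (sqrtLift (fun r => -(r ^ 2 * ψ r)) K p,
      sqrtLift ψ (partialSnd H) p)) p := by
  have hHdiff := hH.contDiff.differentiable (by simp)
  rcases hp.lt_or_gt with hneg | hpos
  · have hev : sqrtLift ψ H =ᶠ[𝓝 p] fun q => dilationIntegral ψ H (√(-q.1), q.2) := by
      filter_upwards [continuous_fst.continuousAt.eventually (gt_mem_nhds hneg)] with q hq
        using sqrtLift_of_nonpos (le_of_lt hq)
    have hsqrt : HasDerivAt (fun s : ℝ => √(-s)) (1 / (2 * √(-p.1)) * -1) p.1 :=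
      (Real.hasDerivAt_sqrt (neg_ne_zero.2 hp)).comp p.1 (hasDerivAt_neg p.1)
    have hint := hasFDerivAt_dilationIntegral hψ.hasFiniteMoments.integrable
      hψ.hasFiniteMoments.mul_left.integrable hH (√(-p.1), p.2)
    refine ((hasFDerivAt_comp_map_fst hint hsqrt).congr_of_eventuallyEq hev).congr_fderiv ?_
    have hne : √(-p.1) ≠ 0 := Real.sqrt_ne_zero'.2 (neg_pos.2 hneg)
    rw [sqrtLift_of_nonpos hneg.le, sqrtLift_of_nonpos hneg.le, dilationIntegral_partialFst hK,
      smul_smul, show 1 / (2 * √(-p.1)) * -1 * -(2 * √(-p.1)) = 1 by field_simp, one_smul]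
  · have hev : sqrtLift ψ H =ᶠ[𝓝 p] fun q => H (√q.1, q.2) := by
      filter_upwards [continuous_fst.continuousAt.eventually (lt_mem_nhds hpos)] with q hq
        using sqrtLift_of_nonneg hψ.integral_eq_one (le_of_lt hq)
    refine ((hasFDerivAt_comp_map_fst (hasFDerivAt_totalDeriv (hHdiff _))
      (Real.hasDerivAt_sqrt hp)).congr_of_eventuallyEq hev).congr_fderiv ?_
    have hne : √p.1 ≠ 0 := Real.sqrt_ne_zero'.2 hpos
    rw [sqrtLift_of_nonneg hψ.neg_sq_mul.integral_eq_one hpos.le,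
      sqrtLift_of_nonneg hψ.integral_eq_one hpos.le, hK, smul_smul,
      one_div_mul_cancel (mul_ne_zero two_ne_zero hne), one_smul]

theorem contDiff_sqrtLift [CompleteSpace E] (hψ : IsReflectionKernel ψ) (hH : IsTestFamily H)
    (heven : ∀ t u, H (-t, u) = H (t, u)) : ContDiff ℝ ∞ (sqrtLift ψ H) := by
  refine contDiff_infty.2 fun n => ?_
  induction n generalizing E ψ with
  | zero => exact contDiff_zero.2 (continuous_sqrtLift hψ.hasFiniteMoments hH)
  | succ n ih =>
    obtain ⟨K, hK, hK_even, hHK⟩ := hH.exists_partialFst_eq heven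
    have hsnd_even : ∀ t u, partialSnd H (-t, u) = partialSnd H (t, u) := fun t u => by
      simp only [partialSnd, heven]
    have hcont : ContDiff ℝ n fun p => totalDeriv (sqrtLift (fun r => -(r ^ 2 * ψ r)) K p,
        sqrtLift ψ (partialSnd H) p) :=
      (totalDeriv (V := V) (E := E)).contDiff.comp ((ih hψ.neg_sq_mul hK hK_even).prodMk
        (ih hψ hH.partialSnd hsnd_even))
    rw [Nat.cast_add, Nat.cast_one, contDiff_succ_iff_hasFDerivAt]
    exact ⟨_, hcont, hasFDerivAt_of_forall_fst_ne_zero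
      (continuous_sqrtLift hψ.hasFiniteMoments hH) hcont.continuous fun p =>
        hasFDerivAt_sqrtLift_of_ne_zero hψ hH hHK⟩

end SqrtLift

section Whitney

variable {V E : Type u} [NormedAddCommGroup V] [NormedSpace ℝ V]
  [NormedAddCommGroup E] [NormedSpace ℝ E] {F : ℝ × V → E}

theorem IsTestFamily.exists_eq_smul_sq [CompleteSpace E] (hF : IsTestFamily F)
    (hodd : ∀ t u, F (-t, u) = -F (t, u)) :
    ∃ G : ℝ × V → E, ContDiff ℝ ∞ G ∧ ∀ t u, F (t, u) = t • G (t ^ 2, u) := by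
  obtain ⟨ψ, hψ⟩ := exists_isReflectionKernel
  obtain ⟨H, hH, hFH⟩ := hF.exists_eq_smul (eq_zero_of_odd hodd)
  have heven := even_of_odd_smul hFH hodd
  refine ⟨sqrtLift ψ H, contDiff_sqrtLift hψ hH heven, fun t u => ?_⟩
  rw [sqrtLift_sq hψ.integral_eq_one heven, hFH]

theorem exists_eq_smul_sq_of_eq_zero_of_sq_le {δ : ℝ} (hδ : 0 < δ) (hF : ContDiff ℝ ∞ F)
    (hodd : ∀ t u, F (-t, u) = -F (t, u)) (hzero : ∀ t, t ^ 2 ≤ δ → ∀ u, F (t, u) = 0) :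
    ∃ G : ℝ × V → E, ContDiff ℝ ∞ G ∧ ∀ t u, F (t, u) = t • G (t ^ 2, u) := by
  refine ⟨fun p => (√p.1)⁻¹ • F (√p.1, p.2), contDiff_iff_contDiffAt.2 fun p => ?_, fun t u => ?_⟩
  · rcases lt_or_ge p.1 δ with hp | hp
    · refine (contDiffAt_const (c := (0 : E))).congr_of_eventuallyEq ?_
      filter_upwards [continuous_fst.continuousAt.eventually (gt_mem_nhds hp)] with q hq
      have hsq : √q.1 ^ 2 ≤ δ := by
        rw [Real.sq_sqrt']
        exact max_le hq.le hδ.le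
      rw [hzero _ hsq, smul_zero]
    · have hp₀ : 0 < p.1 := hδ.trans_le hp
      have hsqrt : ContDiffAt ℝ ∞ (fun q : ℝ × V => √q.1) p := contDiffAt_fst.sqrt hp₀.ne'
      exact (hsqrt.inv (Real.sqrt_ne_zero'.2 hp₀)).smul
        (hF.contDiffAt.comp p (hsqrt.prodMk contDiffAt_snd))
  · simp only [Real.sqrt_sq_eq_abs]
    rcases eq_or_ne t 0 with rfl | ht
    · rw [zero_smul, eq_zero_of_odd hodd]
    · rcases abs_choice t with h | h <;> simp [h, hodd, smul_smul, ht]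

theorem whitney_odd_general [CompleteSpace E] (hF : ContDiff ℝ ∞ F)
    (hodd : ∀ t u, F (-t, u) = -F (t, u)) :
    ∃ G : ℝ × V → E, ContDiff ℝ ∞ G ∧ ∀ t u, F (t, u) = t • G (t ^ 2, u) := by
  let χ : ContDiffBump (0 : ℝ) := ⟨1, 2, one_pos, one_lt_two⟩
  have hχ : ContDiff ℝ ∞ fun p : ℝ × V => χ (p.1 ^ 2) := χ.contDiff.comp (contDiff_fst.pow 2)
  have hnear : IsTestFamily fun p : ℝ × V => χ (p.1 ^ 2) • F p := by
    refine ⟨hχ.smul hF, 2, fun t ht u => ?_⟩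
    rw [χ.zero_of_le_dist, zero_smul]
    rw [dist_zero_right, norm_pow, Real.norm_eq_abs]
    exact ht.le.trans (le_self_pow₀ (by linarith) two_ne_zero)
  obtain ⟨G₁, hG₁, hnear_eq⟩ :=
    hnear.exists_eq_smul_sq fun t u => by simp only [neg_sq, hodd, smul_neg]
  have hfar : ContDiff ℝ ∞ fun p : ℝ × V => (1 - χ (p.1 ^ 2)) • F p :=
    (contDiff_const.sub hχ).smul hF
  have hfar_zero : ∀ t : ℝ, t ^ 2 ≤ 1 → ∀ u, (1 - χ (t ^ 2)) • F (t, u) = 0 := fun t ht u => by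
    rw [χ.one_of_mem_closedBall (by simpa [χ] using ht), sub_self, zero_smul]
  obtain ⟨G₂, hG₂, hfar_eq⟩ := exists_eq_smul_sq_of_eq_zero_of_sq_le one_pos hfar
    (fun t u => by simp only [neg_sq, hodd, smul_neg]) hfar_zero
  refine ⟨fun p => G₁ p + G₂ p, hG₁.add hG₂, fun t u => ?_⟩
  rw [smul_add, ← hnear_eq, ← hfar_eq, ← add_smul, add_sub_cancel, one_smul]

end Whitney

end

/-- parametrized Whitney odd-function theorem. A `C^∞` function
`F(t,u)` on `ℝ × ℝᵐ` which is odd in `t` is of the form `F(t,u) = t·G(t², u)` for a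
`C^∞` function `G`. -/
theorem whitney_odd (m : ℕ) (F : ℝ × (Fin m → ℝ) → ℝ) (hF : ContDiff ℝ ∞ F)
    (hodd : ∀ (t : ℝ) (u : Fin m → ℝ), F (-t, u) = -F (t, u)) :
    ∃ G : ℝ × (Fin m → ℝ) → ℝ, ContDiff ℝ ∞ G ∧
      ∀ (t : ℝ) (u : Fin m → ℝ), F (t, u) = t * G (t ^ 2, u) := by
  simpa only [smul_eq_mul] using whitney_odd_general hF hodd
end
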